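/- Let 1<p<∞, α ≤ n/p, and ε>0, and set ν = n/p + ε. From the estimates ‖φψ‖_{H^ν_{p'}} ≤ C‖φ‖_{H^ν_p}‖ψ‖_{H^ν_{p'}} and ‖φψ‖_{L_1} ≤ ‖φ‖_{L_p}‖ψ‖_{L_{p'}}, multilinear complex interpolation yields ‖φψ‖_{H^α_s} ≤ C‖φ‖_{H^α_p}‖ψ‖_{H^α_{p'}} for all φ,ψ ∈ C_c^∞(ℝⁿ), where s = (n+pε)/(n+pε−α). -/

import Mathlib

open MeasureTheory FourierTransform Real Metric Complex
open scoped ENNReal Topology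

noncomputable section

/-- Euclidean space ℝⁿ. -/
abbrev Euc (n : ℕ) := EuclideanSpace ℝ (Fin n)

/-- A test function: infinitely differentiable with compact support (`φ ∈ C_c^∞(ℝⁿ)`). -/
def IsTest {n : ℕ} (φ : Euc n → ℂ) : Prop :=
  ContDiff ℝ (⊤ : ℕ∞) φ ∧ HasCompactSupport φ

/-- The Bessel potential `(1-Δ)^{α/2} f`, realized via the Fourier transform:
`𝓕⁻¹ ((1+|ξ|²)^{α/2} 𝓕 f)`. -/
def besselPotential (n : ℕ) (α : ℝ) (f : Euc n → ℂ) : Euc n → ℂ :=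
  𝓕⁻ (fun ξ : Euc n => (((1 + ‖ξ‖ ^ 2) ^ (α / 2) : ℝ) : ℂ) * 𝓕 f ξ)

/-- The Bessel-potential Sobolev norm `‖f‖_{H^α_p} = ‖(1-Δ)^{α/2} f‖_{L_p}`,
with `p ∈ [1,∞]` an extended real exponent. -/
def HNormE (n : ℕ) (α : ℝ) (p : ℝ≥0∞) (f : Euc n → ℂ) : ℝ :=
  (eLpNorm (besselPotential n α f) p volume).toReal

/-- The Bessel-potential Sobolev norm, for a real exponent `p`. -/
def HNorm (n : ℕ) (α p : ℝ) (f : Euc n → ℂ) : ℝ :=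
  HNormE n α (ENNReal.ofReal p) f

/-- Membership of a function in `H^α_p`. -/
def MemH (n : ℕ) (α p : ℝ) (f : Euc n → ℂ) : Prop :=
  eLpNorm (besselPotential n α f) (ENNReal.ofReal p) volume < ⊤

/-- The Hölder conjugate exponent `p' = p/(p-1)` (as a real number, for `1 < p < ∞`). -/
def conjExp (p : ℝ) : ℝ := p / (p - 1)

/-- The Hölder conjugate exponent as an extended real exponent (`1' = ∞`). -/
def conjExpE (p : ℝ) : ℝ≥0∞ := if p ≤ 1 then ∞ else ENNReal.ofReal (p / (p - 1))

/-- Distributions, modelled as functionals on functions on ℝⁿ;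
they are only ever applied to (products of) test functions. -/
def Distr (n : ℕ) := (Euc n → ℂ) → ℂ

/-- The product of a function and a distribution: `(φμ)(ψ) = μ(φψ)`. -/
def distMul {n : ℕ} (φ : Euc n → ℂ) (μ : Distr n) : Distr n :=
  fun ψ => μ (fun x => φ x * ψ x)

/-- `μ` lies in `H^{-γ}_r` with constant `C`: `|⟨μ, ψ⟩| ≤ C‖ψ‖_{H^γ_{r'}}` for all test
functions `ψ` (`C_c^∞` being dense in `H^γ_{r'}`, this realizes the dual norm). -/
def NegBound (n : ℕ) (γ r : ℝ) (μ : Distr n) (C : ℝ) : Prop :=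
  0 ≤ C ∧ ∀ ψ : Euc n → ℂ, IsTest ψ → ‖μ ψ‖ ≤ C * HNormE n γ (conjExpE r) ψ

/-- Membership `μ ∈ H^{-γ}_r` for a distribution `μ`. -/
def MemNeg (n : ℕ) (γ r : ℝ) (μ : Distr n) : Prop := ∃ C, NegBound n γ r μ C

/-- The norm `‖μ‖_{H^{-γ}_r}`, as the best constant. -/
def negNorm (n : ℕ) (γ r : ℝ) (μ : Distr n) : ℝ := sInf {C | NegBound n γ r μ C}

/-- `μ ∈ H^{-γ}_{r,loc}`: every localization `φμ` by a test function lies in `H^{-γ}_r`. -/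
def MemNegLoc (n : ℕ) (γ r : ℝ) (μ : Distr n) : Prop :=
  ∀ φ : Euc n → ℂ, IsTest φ → MemNeg n γ r (distMul φ μ)

/-- `μ` is a multiplier from `H^α_p` to `H^{-α}_p` with constant `C`:
`‖μφ‖_{H^{-α}_p} ≤ C ‖φ‖_{H^α_p}` for all test functions `φ`. -/
def MulBound (n : ℕ) (α p : ℝ) (μ : Distr n) (C : ℝ) : Prop :=
  0 ≤ C ∧ ∀ φ : Euc n → ℂ, IsTest φ → negNorm n α p (distMul φ μ) ≤ C * HNorm n α p φ

/-- `μ ∈ M[H^α_p → H^{-α}_p]`. -/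
def IsMultiplier (n : ℕ) (α p : ℝ) (μ : Distr n) : Prop :=
  MemNegLoc n α p μ ∧ ∃ C, MulBound n α p μ C

/-- The multiplier norm `‖μ‖_{M^α_p}`. -/
def mulNorm (n : ℕ) (α p : ℝ) (μ : Distr n) : ℝ := sInf {C | MulBound n α p μ C}

/-- A fixed admissible cutoff: smooth, compactly supported, nonnegative, `≡ 1` on the
unit ball. -/
def IsCutoff {n : ℕ} (η : Euc n → ℝ) : Prop :=
  ContDiff ℝ (⊤ : ℕ∞) η ∧ HasCompactSupport η ∧ (∀ x, 0 ≤ η x) ∧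
    ∀ x ∈ closedBall (0 : Euc n) 1, η x = 1

/-- The translated cutoff `η(· − z)`, as a complex-valued function. -/
def shiftCutoff {n : ℕ} (η : Euc n → ℝ) (z : Euc n) : Euc n → ℂ :=
  fun x => ((η (x - z) : ℝ) : ℂ)

/-- `u ∈ H^α_{p,unif}` (with respect to the cutoff `η`). -/
def MemHUnif (n : ℕ) (η : Euc n → ℝ) (α p : ℝ) (u : Euc n → ℂ) : Prop :=
  BddAbove (Set.range fun z : Euc n => HNorm n α p (fun x => shiftCutoff η z x * u x))

/-- The norm `‖u‖_{α,p,unif} = sup_z ‖η(·-z)u‖_{H^α_p}`. -/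
def unifNorm (n : ℕ) (η : Euc n → ℝ) (α p : ℝ) (u : Euc n → ℂ) : ℝ :=
  ⨆ z : Euc n, HNorm n α p (fun x => shiftCutoff η z x * u x)

/-- `μ ∈ H^{-γ}_{r,unif}` (for a distribution `μ`). -/
def MemNegUnif (n : ℕ) (η : Euc n → ℝ) (γ r : ℝ) (μ : Distr n) : Prop :=
  (∀ z : Euc n, MemNeg n γ r (distMul (shiftCutoff η z) μ)) ∧
    BddAbove (Set.range fun z : Euc n => negNorm n γ r (distMul (shiftCutoff η z) μ))

/-- The norm `‖μ‖_{-γ,r,unif} = sup_z ‖η(·-z)μ‖_{H^{-γ}_r}`. -/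
def negUnifNorm (n : ℕ) (η : Euc n → ℝ) (γ r : ℝ) (μ : Distr n) : ℝ :=
  ⨆ z : Euc n, negNorm n γ r (distMul (shiftCutoff η z) μ)

/-- Polking's nonlinear operator
`D^η_{ρ,q} u(x) = [∫_0^∞ (∫_{B₁} |u(x+ξy)-u(x)|^ρ dy)^{q/ρ} ξ^{-1-ηq} dξ]^{1/q}`. -/
def Dop (n : ℕ) (η ρ q : ℝ) (u : Euc n → ℂ) (x : Euc n) : ℝ :=
  (∫ ξ in Set.Ioi (0 : ℝ),
      (∫ y in ball (0 : Euc n) 1, ‖u (x + ξ • y) - u x‖ ^ ρ) ^ (q / ρ) *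
        ξ ^ (-1 - η * q)) ^ (1 / q)

/-- The `i`-th standard basis vector of ℝⁿ. -/
def eucBasis (n : ℕ) (i : Fin n) : Euc n := EuclideanSpace.single i 1

/-- The negative Laplacian `-Δ f = -∑ ∂²f/∂x_i²`. -/
def negLap {n : ℕ} (f : Euc n → ℂ) : Euc n → ℂ := fun x =>
  -∑ i : Fin n, fderiv ℝ (fun y => fderiv ℝ f y (eucBasis n i)) x (eucBasis n i)

/-- The polyharmonic operator `(-Δ)^m`. -/
def polyharmonic (n m : ℕ) (f : Euc n → ℂ) : Euc n → ℂ := negLap^[m] f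

/-- The Schrödinger-type operator `L u = (-Δ)^m u + q·u`, viewed as a distribution when
applied to a (test) function `u`. -/
def schrodingerOp (n m : ℕ) (q : Distr n) (u : Euc n → ℂ) : Distr n :=
  fun ψ => (∫ x : Euc n, polyharmonic n m u x * ψ x) + q (fun x => u x * ψ x)

/-- Boundedness of `L = (-Δ)^m + q` from `H^m_p` to `H^{-m}_p`: defined first on test
functions (and then extended by density). -/
def LBounded (n m : ℕ) (p : ℝ) (q : Distr n) : Prop :=
  ∃ C, 0 ≤ C ∧ ∀ u : Euc n → ℂ, IsTest u →
    MemNeg n m p (schrodingerOp n m q u) ∧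
      negNorm n m p (schrodingerOp n m q u) ≤ C * HNorm n m p u

end

namespace IPE
open scoped SchwartzMap

noncomputable section

/-- The character `e^{2 π i r}`. -/
def ch (r : ℝ) : ℂ := Complex.exp (((2 * Real.pi * r : ℝ) : ℂ) * Complex.I)

lemma ch_add (a b : ℝ) : ch (a + b) = ch a * ch b := by
  unfold ch; rw [← Complex.exp_add]; congr 1; push_cast; ring

lemma ch_zero : ch 0 = 1 := by simp [ch]

lemma norm_ch (a : ℝ) : ‖ch a‖ = 1 := by
  unfold ch; exact Complex.norm_exp_ofReal_mul_I _

lemma continuous_ch : Continuous ch := by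
  unfold ch; fun_prop

lemma norm_one_sub_ch_le (r : ℝ) : ‖1 - ch r‖ ≤ 2 * Real.pi * |r| := by
  have := Real.norm_exp_I_mul_ofReal_sub_one_le (x := 2 * Real.pi * r)
  rw [norm_sub_rev]
  unfold ch
  rw [mul_comm _ Complex.I]
  refine this.trans ?_
  rw [Real.norm_eq_abs, abs_mul, abs_of_pos (by positivity)]

lemma norm_one_sub_ch_le_two (r : ℝ) : ‖1 - ch r‖ ≤ 2 := by
  refine (norm_sub_le _ _).trans ?_
  rw [norm_ch]; norm_num

/-- The Bessel symbol. -/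
def sym {n : ℕ} (a : ℝ) (ξ : Euc n) : ℝ := (1 + ‖ξ‖ ^ 2) ^ (a / 2)

lemma sym_pos {n : ℕ} (a : ℝ) (ξ : Euc n) : 0 < sym a ξ := by
  unfold sym; positivity

lemma sym_add {n : ℕ} (a b : ℝ) (ξ : Euc n) : sym (a + b) ξ = sym a ξ * sym b ξ := by
  unfold sym; rw [← Real.rpow_add (by positivity)]; congr 1; ring

lemma sym_zero {n : ℕ} (ξ : Euc n) : sym 0 ξ = 1 := by simp [sym]

lemma sym_two {n : ℕ} (ξ : Euc n) : sym 2 ξ = 1 + ‖ξ‖ ^ 2 := by simp [sym]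

lemma continuous_sym {n : ℕ} (a : ℝ) : Continuous (sym a : Euc n → ℝ) := by
  unfold sym
  refine Continuous.rpow_const (by fun_prop) (fun x => Or.inl (by positivity))

lemma sym_temp {n : ℕ} (a : ℝ) :
    Function.HasTemperateGrowth (fun ξ : Euc n => ((sym a ξ : ℝ) : ℂ)) := by
  unfold sym; fun_prop

/-- Peetre's inequality. -/
lemma sym_peetre {n : ℕ} {e : ℝ} (he : 0 ≤ e) (ξ η : Euc n) :
    sym e (ξ + η) ≤ 2 ^ (e / 2) * (sym e ξ * sym e η) := by
  unfold sym
  rw [← Real.mul_rpow (by positivity) (by positivity), ← Real.mul_rpow (by positivity) (by positivity)]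
  refine Real.rpow_le_rpow (by positivity) ?_ (by positivity)
  have h1 : ‖ξ + η‖ ≤ ‖ξ‖ + ‖η‖ := norm_add_le _ _
  have h2 : ‖ξ + η‖ ^ 2 ≤ (‖ξ‖ + ‖η‖) ^ 2 := by gcongr
  nlinarith [sq_nonneg (‖ξ‖ - ‖η‖), sq_nonneg (‖ξ‖ * ‖η‖)]

/-- Bessel potential on Schwartz functions. -/
def J {n : ℕ} (a : ℝ) : 𝓢(Euc n, ℂ) →L[ℂ] 𝓢(Euc n, ℂ) :=
  SchwartzMap.fourierMultiplierCLM ℂ (fun ξ : Euc n => ((sym a ξ : ℝ) : ℂ))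

lemma fourier_J {n : ℕ} (a : ℝ) (f : 𝓢(Euc n, ℂ)) (ξ : Euc n) :
    𝓕 (J a f) ξ = (sym a ξ : ℂ) * 𝓕 f ξ := by
  unfold J
  rw [SchwartzMap.fourierMultiplierCLM_apply, FourierTransform.fourier_fourierInv_eq,
    SchwartzMap.smulLeftCLM_apply_apply (sym_temp a)]
  rfl

lemma schwartz_ext_fourier {n : ℕ} {f g : 𝓢(Euc n, ℂ)} (h : ∀ ξ, 𝓕 f ξ = 𝓕 g ξ) : f = g := by
  have : 𝓕 f = 𝓕 g := by ext ξ; exact h ξ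
  rw [← FourierTransform.fourierInv_fourier_eq (F := 𝓢(Euc n, ℂ)) f, this, FourierTransform.fourierInv_fourier_eq]

lemma J_J {n : ℕ} (a b : ℝ) (f : 𝓢(Euc n, ℂ)) : J a (J b f) = J (a + b) f := by
  apply schwartz_ext_fourier
  intro ξ
  rw [fourier_J, fourier_J, fourier_J, sym_add]; push_cast; ring

lemma J_zero {n : ℕ} (f : 𝓢(Euc n, ℂ)) : J 0 f = f := by
  apply schwartz_ext_fourier
  intro ξ
  rw [fourier_J, sym_zero]; simp

/-- Fourier inversion for Schwartz functions. -/
lemma inversion {n : ℕ} (f : 𝓢(Euc n, ℂ)) (x : Euc n) :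
    f x = ∫ ξ, ch (inner ℝ ξ x) * 𝓕 f ξ := by
  conv_lhs => rw [← FourierTransform.fourierInv_fourier_eq (F := 𝓢(Euc n, ℂ)) f]
  rw [SchwartzMap.fourierInv_coe, Real.fourierInv_eq']
  rfl

lemma J_apply {n : ℕ} (a : ℝ) (f : 𝓢(Euc n, ℂ)) (x : Euc n) :
    J a f x = ∫ ξ, ch (inner ℝ ξ x) * ((sym a ξ : ℂ) * 𝓕 f ξ) := by
  rw [inversion]; simp_rw [fourier_J]

lemma besselPotential_eq {n : ℕ} (a : ℝ) (f : 𝓢(Euc n, ℂ)) :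
    besselPotential n a f = J a f := by
  funext x
  rw [J_apply]
  unfold besselPotential
  rw [Real.fourierInv_eq']
  rfl

/-- Translation. -/
def tr {n : ℕ} (y : Euc n) : 𝓢(Euc n, ℂ) →L[ℂ] 𝓢(Euc n, ℂ) := SchwartzMap.compSubConstCLM ℂ y

lemma tr_apply {n : ℕ} (y : Euc n) (f : 𝓢(Euc n, ℂ)) (x : Euc n) : tr y f x = f (x - y) := rfl

lemma fourier_tr {n : ℕ} (y : Euc n) (f : 𝓢(Euc n, ℂ)) (ξ : Euc n) :
    𝓕 (tr y f) ξ = ch (-(inner ℝ y ξ)) * 𝓕 f ξ := by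
  rw [SchwartzMap.fourier_coe, SchwartzMap.fourier_coe, Real.fourier_eq', Real.fourier_eq']
  simp_rw [tr_apply]
  rw [← integral_const_mul, ← integral_add_right_eq_self _ y]
  congr 1; ext v
  simp only [add_sub_cancel_right, smul_eq_mul, ch, ← mul_assoc, ← Complex.exp_add, inner_add_left]
  congr 2
  push_cast; ring

/-- Difference operator. -/
def dl {n : ℕ} (y : Euc n) (f : 𝓢(Euc n, ℂ)) : 𝓢(Euc n, ℂ) := f - tr y f

lemma dl_apply {n : ℕ} (y : Euc n) (f : 𝓢(Euc n, ℂ)) (x : Euc n) : dl y f x = f x - f (x - y) := rfl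

lemma fourier_dl {n : ℕ} (y : Euc n) (f : 𝓢(Euc n, ℂ)) (ξ : Euc n) :
    𝓕 (dl y f) ξ = (1 - ch (-(inner ℝ y ξ))) * 𝓕 f ξ := by
  have : 𝓕 (dl y f) = 𝓕 f - 𝓕 (tr y f) := by
    unfold dl
    exact map_sub (FourierTransform.fourierCLM ℂ 𝓢(Euc n, ℂ)) f (tr y f)
  rw [this]
  change 𝓕 f ξ - 𝓕 (tr y f) ξ = _
  rw [fourier_tr]; ring

lemma J_dl {n : ℕ} (a : ℝ) (y : Euc n) (f : 𝓢(Euc n, ℂ)) : J a (dl y f) = dl y (J a f) := by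
  apply schwartz_ext_fourier
  intro ξ
  rw [fourier_J, fourier_dl, fourier_dl, fourier_J]; ring

/-- Pointwise product of Schwartz functions. -/
def pr {n : ℕ} (u v : 𝓢(Euc n, ℂ)) : 𝓢(Euc n, ℂ) :=
  SchwartzMap.pairing (ContinuousLinearMap.mul ℂ ℂ) u v

lemma pr_apply {n : ℕ} (u v : 𝓢(Euc n, ℂ)) (x : Euc n) : pr u v x = u x * v x := by
  simp [pr, SchwartzMap.pairing_apply_apply]

lemma pr_comm {n : ℕ} (u v : 𝓢(Euc n, ℂ)) : pr u v = pr v u := by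
  ext x; rw [pr_apply, pr_apply, mul_comm]

/-- `L^r` norm of a Schwartz function. -/
def N {n : ℕ} (r : ℝ) (f : 𝓢(Euc n, ℂ)) : ℝ≥0∞ := eLpNorm f (ENNReal.ofReal r) volume

lemma N_lt_top {n : ℕ} (r : ℝ) (f : 𝓢(Euc n, ℂ)) : N r f < ⊤ := (f.memLp _ _).2

lemma N_ne_top {n : ℕ} (r : ℝ) (f : 𝓢(Euc n, ℂ)) : N r f ≠ ⊤ := (N_lt_top r f).ne

lemma integrable_sym_fourier {n : ℕ} (a : ℝ) (f : 𝓢(Euc n, ℂ)) :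
    Integrable (fun ξ => (sym a ξ : ℂ) * 𝓕 f ξ) := by
  have := (𝓕 (J a f)).integrable (μ := volume)
  refine this.congr (Filter.Eventually.of_forall fun ξ => ?_)
  exact fourier_J a f ξ

lemma fourier_pr {n : ℕ} (u v : 𝓢(Euc n, ℂ)) (ζ : Euc n) :
    𝓕 (pr u v) ζ = ∫ ξ, 𝓕 u ξ * 𝓕 v (ζ - ξ) := by
  have h : 𝓕⁻ (SchwartzMap.convolution (ContinuousLinearMap.mul ℂ ℂ) (𝓕 u) (𝓕 v)) = pr u v := by
    ext x
    rw [SchwartzMap.fourierInv_apply_eq, SchwartzMap.fourier_convolution]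
    change SchwartzMap.pairing _ _ _ (-x) = _
    rw [SchwartzMap.pairing_apply_apply, pr_apply]
    have key : ∀ w : 𝓢(Euc n, ℂ), 𝓕 (𝓕 w) (-x) = w x := by
      intro w
      have : 𝓕⁻ (𝓕 w) x = w x := by rw [FourierTransform.fourierInv_fourier_eq]
      rw [← this, SchwartzMap.fourierInv_apply_eq]; rfl
    rw [key, key]; rfl
  rw [← h, FourierTransform.fourier_fourierInv_eq, SchwartzMap.convolution_apply]
  rfl

end

end IPE

namespace IPE
open scoped SchwartzMap

noncomputable section

lemma integrable_bilin {n : ℕ} {e : ℝ} (he : 0 ≤ e) (u v : 𝓢(Euc n, ℂ)) (x : Euc n) :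
    Integrable (fun p : Euc n × Euc n => ch (inner ℝ (p.1 + p.2) x) *
      ((sym e (p.1 + p.2) : ℂ) * (𝓕 u p.1 * 𝓕 v p.2))) (volume.prod volume) := by
  have h := ((integrable_sym_fourier e u).mul_prod (integrable_sym_fourier e v)).const_mul
    ((2 ^ (e / 2) : ℝ) : ℂ)
  refine h.mono ?_ (Filter.Eventually.of_forall fun p => ?_)
  · apply Continuous.aestronglyMeasurable
    have h1 := continuous_ch
    have h2 := continuous_sym (n := n) e
    have h3 := (𝓕 u).continuous
    have h4 := (𝓕 v).continuous
    fun_prop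
  · rw [norm_mul, norm_ch, one_mul]
    simp only [norm_mul, Complex.norm_real, Real.norm_eq_abs]
    rw [abs_of_pos (sym_pos _ _), abs_of_pos (sym_pos _ _), abs_of_pos (sym_pos _ _),
      abs_of_pos (by positivity : (0:ℝ) < 2 ^ (e / 2))]
    have := sym_peetre he p.1 p.2
    calc sym e (p.1 + p.2) * (‖𝓕 u p.1‖ * ‖𝓕 v p.2‖)
        ≤ (2 ^ (e / 2) * (sym e p.1 * sym e p.2)) * (‖𝓕 u p.1‖ * ‖𝓕 v p.2‖) := by gcongr
      _ = _ := by ring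

lemma J_pr_apply {n : ℕ} {e : ℝ} (he : 0 ≤ e) (u v : 𝓢(Euc n, ℂ)) (x : Euc n) :
    J e (pr u v) x = ∫ p : Euc n × Euc n, ch (inner ℝ (p.1 + p.2) x) *
      ((sym e (p.1 + p.2) : ℂ) * (𝓕 u p.1 * 𝓕 v p.2)) ∂(volume.prod volume) := by
  rw [integral_prod _ (integrable_bilin he u v x), J_apply]
  simp_rw [fourier_pr, ← integral_const_mul]
  rw [integral_integral_swap]
  · congr 1; ext ξ
    rw [← integral_add_left_eq_self _ ξ]
    congr 1; ext η
    simp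
  · have h := ((integrable_sym_fourier e u).convolution_integrand
      (ContinuousLinearMap.mul ℂ ℂ) (integrable_sym_fourier e v)).const_mul
      ((2 ^ (e / 2) : ℝ) : ℂ)
    refine h.mono ?_ (Filter.Eventually.of_forall fun p => ?_)
    · apply Continuous.aestronglyMeasurable
      have h1 := continuous_ch
      have h2 := continuous_sym (n := n) e
      have h3 := (𝓕 u).continuous
      have h4 := (𝓕 v).continuous
      unfold Function.uncurry
      fun_prop
    · simp only [Function.uncurry]
      rw [norm_mul, norm_ch, one_mul]
      simp only [norm_mul, Complex.norm_real, Real.norm_eq_abs, ContinuousLinearMap.mul_apply']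
      rw [abs_of_pos (sym_pos _ _), abs_of_pos (sym_pos _ _), abs_of_pos (sym_pos _ _),
        abs_of_pos (by positivity : (0:ℝ) < 2 ^ (e / 2))]
      have := sym_peetre he p.2 (p.1 - p.2)
      rw [add_sub_cancel] at this
      calc sym e (p.1) * (‖𝓕 u p.2‖ * ‖𝓕 v (p.1 - p.2)‖)
          ≤ (2 ^ (e / 2) * (sym e p.2 * sym e (p.1 - p.2))) * (‖𝓕 u p.2‖ * ‖𝓕 v (p.1 - p.2)‖) := by
            gcongr
        _ = _ := by ring

/-- Minkowski's integral inequality (for a function whose norm is known to be finite). -/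
lemma minkowski {X T : Type*} [MeasurableSpace X] [MeasurableSpace T] {μ : Measure X}
    {ν : Measure T} [SFinite μ] [SFinite ν] {r : ℝ} (hr : 1 ≤ r) {u : X → ℝ≥0∞}
    (hu : Measurable u) (hfin : ∫⁻ x, u x ^ r ∂μ ≠ ⊤) {F : T → X → ℝ≥0∞}
    (hF : Measurable (Function.uncurry F)) (h : ∀ x, u x ≤ ∫⁻ t, F t x ∂ν) :
    (∫⁻ x, u x ^ r ∂μ) ^ (1 / r) ≤ ∫⁻ t, (∫⁻ x, F t x ^ r ∂μ) ^ (1 / r) ∂ν := by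
  have hFt : ∀ t, Measurable (F t) := fun t => hF.comp measurable_prodMk_left
  rcases eq_or_lt_of_le hr with rfl | hr1
  · simp only [ENNReal.rpow_one, div_one]
    rw [lintegral_lintegral_swap hF.aemeasurable]
    exact lintegral_mono h
  have hr0 : 0 < r := by linarith
  set A := ∫⁻ x, u x ^ r ∂μ with hA
  set B := ∫⁻ t, (∫⁻ x, F t x ^ r ∂μ) ^ (1 / r) ∂ν with hB
  by_cases hA0 : A = 0
  · rw [hA0, ENNReal.zero_rpow_of_pos (by positivity)]; exact zero_le
  have hconj : (Real.conjExponent r).HolderConjugate r := (Real.HolderConjugate.conjExponent hr1).symm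
  have hce : Real.conjExponent r = r / (r - 1) := rfl
  have hr1' : r - 1 ≠ 0 := by linarith
  have key : A ≤ A ^ (1 - 1 / r) * B := by
    calc A = ∫⁻ x, u x ^ (r - 1) * u x ∂μ := by
          rw [hA]; congr 1; ext x
          conv_lhs => rw [show r = (r - 1) + 1 by ring]
          rw [ENNReal.rpow_add_of_nonneg _ _ (by linarith) (by norm_num), ENNReal.rpow_one]
      _ ≤ ∫⁻ x, u x ^ (r - 1) * ∫⁻ t, F t x ∂ν ∂μ := by
          gcongr with x; exact h x
      _ = ∫⁻ x, ∫⁻ t, u x ^ (r - 1) * F t x ∂ν ∂μ := by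
          congr 1; ext x
          rw [lintegral_const_mul]
          exact hF.comp measurable_prodMk_right
      _ = ∫⁻ t, ∫⁻ x, u x ^ (r - 1) * F t x ∂μ ∂ν := by
          rw [lintegral_lintegral_swap]
          apply Measurable.aemeasurable
          exact ((hu.pow_const _).comp measurable_fst).mul (hF.comp measurable_swap)
      _ ≤ ∫⁻ t, A ^ (1 - 1 / r) * (∫⁻ x, F t x ^ r ∂μ) ^ (1 / r) ∂ν := by
          gcongr with t
          refine (ENNReal.lintegral_mul_le_Lp_mul_Lq μ hconj (hu.pow_const _).aemeasurable
            (hFt t).aemeasurable).trans ?_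
          gcongr
          apply le_of_eq
          have e1 : ∀ x, (u x ^ (r - 1)) ^ (Real.conjExponent r) = u x ^ r := by
            intro x
            rw [← ENNReal.rpow_mul, hce]; congr 1; field_simp
          simp_rw [e1]
          rw [← hA]; congr 1
          rw [hce]; field_simp
      _ = A ^ (1 - 1 / r) * B := by
          rw [lintegral_const_mul]
          exact (Measurable.lintegral_prod_right' (f := fun p : T × X => F p.1 p.2 ^ r)
            (hF.pow_const r)).pow_const _
  have hpos : A ^ (1 - 1 / r) ≠ 0 := by
    simp only [ne_eq, ENNReal.rpow_eq_zero_iff, hA0, hfin, false_and, or_self, not_false_eq_true]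
  have hnt : A ^ (1 - 1 / r) ≠ ⊤ := by
    apply ENNReal.rpow_ne_top_of_nonneg _ hfin
    rw [sub_nonneg, div_le_one hr0]; exact hr
  have e2 : A = A ^ (1 - 1 / r) * A ^ (1 / r) := by
    rw [← ENNReal.rpow_add _ _ hA0 hfin]; simp
  have key2 : A ^ (1 - 1 / r) * A ^ (1 / r) ≤ A ^ (1 - 1 / r) * B := e2 ▸ key
  exact (ENNReal.mul_le_mul_iff_right hpos hnt).1 key2

lemma N_eq {n : ℕ} {r : ℝ} (hr : 1 ≤ r) (f : Euc n → ℂ) :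
    eLpNorm f (ENNReal.ofReal r) volume = (∫⁻ x, ‖f x‖ₑ ^ r) ^ (1 / r) := by
  have h0 : 0 < r := by linarith
  rw [eLpNorm_eq_lintegral_rpow_enorm_toReal (by simpa using h0) (by simp)]
  rw [ENNReal.toReal_ofReal h0.le]

/-- Weighted Minkowski inequality for Schwartz functions. -/
lemma minkowskiN {n : ℕ} {T : Type*} [MeasurableSpace T]
    {ν : Measure T} [SFinite ν] {r : ℝ} (hr : 1 ≤ r) (u : 𝓢(Euc n, ℂ))
    {W : T → ℝ≥0∞} (hW : Measurable W) {G : T → Euc n → ℂ}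
    (hG : Measurable (Function.uncurry G)) (h : ∀ x, ‖u x‖ₑ ≤ ∫⁻ t, W t * ‖G t x‖ₑ ∂ν) :
    N r u ≤ ∫⁻ t, W t * eLpNorm (G t) (ENNReal.ofReal r) volume ∂ν := by
  have hGt : ∀ t, Measurable (G t) := fun t => hG.comp measurable_prodMk_left
  have hr0 : 0 < r := by linarith
  unfold N
  simp_rw [N_eq hr]
  refine (minkowski (ν := ν) hr (u := fun x => ‖u x‖ₑ) (F := fun t x => W t * ‖G t x‖ₑ)
    u.continuous.measurable.enorm ?_ ?_ h).trans ?_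
  · have := N_lt_top r u
    unfold N at this
    rw [N_eq hr] at this
    intro h
    rw [h, ENNReal.top_rpow_of_pos (by positivity)] at this
    exact lt_irrefl _ this
  · exact (hW.comp measurable_fst).mul hG.enorm
  · apply le_of_eq
    congr 1; ext t
    simp_rw [ENNReal.mul_rpow_of_nonneg _ _ hr0.le]
    rw [lintegral_const_mul _ ((hGt t).enorm.pow_const _), ENNReal.mul_rpow_of_nonneg _ _ (by positivity),
      ← ENNReal.rpow_mul]
    rw [mul_one_div_cancel hr0.ne', ENNReal.rpow_one]

/-- Jensen/Hölder for a convolution. -/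
lemma conv_pointwise {n : ℕ} {q : ℝ} (hq : 1 ≤ q) {K F : Euc n → ℝ≥0∞} (hK : Measurable K)
    (hF : Measurable F) (x : Euc n) :
    (∫⁻ y, K y * F (x - y)) ^ q ≤ (∫⁻ y, K y) ^ (q - 1) * ∫⁻ y, K y * F (x - y) ^ q := by
  rcases eq_or_lt_of_le hq with rfl | hq1
  · simp
  have hq0 : 0 < q := by linarith
  have hq1' : q - 1 ≠ 0 := by linarith
  have hconj : (Real.conjExponent q).HolderConjugate q := (Real.HolderConjugate.conjExponent hq1).symm
  have hce : Real.conjExponent q = q / (q - 1) := rfl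
  have hFx : Measurable (fun y => F (x - y)) := hF.comp (measurable_const.sub measurable_id)
  have h := ENNReal.lintegral_mul_le_Lp_mul_Lq volume hconj
    (f := fun y => K y ^ (1 - 1 / q)) (g := fun y => K y ^ (1 / q) * F (x - y))
    (hK.pow_const _).aemeasurable ((hK.pow_const _).mul hFx).aemeasurable
  have hle : 0 ≤ 1 - 1 / q := by rw [sub_nonneg, div_le_one hq0]; exact hq
  have e1 : ∀ y, K y ^ (1 - 1 / q) * (K y ^ (1 / q) * F (x - y)) = K y * F (x - y) := by
    intro y
    rw [← mul_assoc, ← ENNReal.rpow_add_of_nonneg _ _ hle (by positivity)]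
    simp
  have e2 : ∀ y, (K y ^ (1 - 1 / q)) ^ (Real.conjExponent q) = K y := by
    intro y
    rw [← ENNReal.rpow_mul, hce]
    rw [show (1 - 1 / q) * (q / (q - 1)) = 1 by field_simp, ENNReal.rpow_one]
  have e3 : ∀ y, (K y ^ (1 / q) * F (x - y)) ^ q = K y * F (x - y) ^ q := by
    intro y
    rw [ENNReal.mul_rpow_of_nonneg _ _ hq0.le, ← ENNReal.rpow_mul, one_div_mul_cancel hq0.ne',
      ENNReal.rpow_one]
  simp only [Pi.mul_apply, e1, e2, e3] at h
  calc (∫⁻ y, K y * F (x - y)) ^ q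
      ≤ ((∫⁻ y, K y) ^ (1 / Real.conjExponent q) * (∫⁻ y, K y * F (x - y) ^ q) ^ (1 / q)) ^ q := by
        gcongr
    _ = _ := by
        rw [ENNReal.mul_rpow_of_nonneg _ _ hq0.le, ← ENNReal.rpow_mul, ← ENNReal.rpow_mul,
          one_div_mul_cancel hq0.ne', ENNReal.rpow_one, hce]
        congr 2; field_simp

lemma conv_Lq {n : ℕ} {q : ℝ} (hq : 1 ≤ q) {K F : Euc n → ℝ≥0∞} (hK : Measurable K)
    (hF : Measurable F) :
    ∫⁻ x, (∫⁻ y, K y * F (x - y)) ^ q ≤ (∫⁻ y, K y) ^ q * ∫⁻ y, F y ^ q := by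
  have hm : Measurable (Function.uncurry fun x y : Euc n => K y * F (x - y) ^ q) := by
    exact (hK.comp measurable_snd).mul ((hF.comp (measurable_fst.sub measurable_snd)).pow_const _)
  calc ∫⁻ x, (∫⁻ y, K y * F (x - y)) ^ q
      ≤ ∫⁻ x, (∫⁻ y, K y) ^ (q - 1) * ∫⁻ y, K y * F (x - y) ^ q := by
        gcongr with x; exact conv_pointwise hq hK hF x
    _ = (∫⁻ y, K y) ^ (q - 1) * ∫⁻ x, ∫⁻ y, K y * F (x - y) ^ q := by
        rw [lintegral_const_mul]
        exact Measurable.lintegral_prod_right' hm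
    _ = (∫⁻ y, K y) ^ (q - 1) * ((∫⁻ y, K y) * ∫⁻ y, F y ^ q) := by
        congr 1
        rw [lintegral_lintegral_swap hm.aemeasurable, ← lintegral_mul_const _ hK]
        congr 1; ext y
        rw [lintegral_const_mul]
        · rw [lintegral_sub_right_eq_self (fun x => F x ^ q) y]
        · exact (hF.comp (measurable_id.sub measurable_const)).pow_const _
    _ = _ := by
        rw [← mul_assoc]
        congr 1
        conv_rhs => rw [show q = (q - 1) + 1 by ring]
        rw [ENNReal.rpow_add_of_nonneg _ _ (by linarith) (by norm_num), ENNReal.rpow_one]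

/-- Young-type inequality. -/
lemma conv_Lr {n : ℕ} {q r : ℝ} (hq : 1 ≤ q) (hqr : q ≤ r) {K F : Euc n → ℝ≥0∞} (hK : Measurable K)
    (hF : Measurable F) (B : ℝ≥0∞) (hM : ∫⁻ y, K y ≤ 1) (hB : ∀ y, K y ≤ B) :
    (∫⁻ x, (∫⁻ y, K y * F (x - y)) ^ r) ^ (1 / r) ≤
      B ^ (1 / q - 1 / r) * (∫⁻ y, F y ^ q) ^ (1 / q) := by
  have hq0 : 0 < q := by linarith
  have hr0 : 0 < r := by linarith
  set A := ∫⁻ y, F y ^ q with hA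
  have hsup : ∀ x, ∫⁻ y, K y * F (x - y) ≤ (B * A) ^ (1 / q) := by
    intro x
    rw [one_div, ENNReal.le_rpow_inv_iff hq0]
    refine (conv_pointwise hq hK hF x).trans ?_
    calc (∫⁻ y, K y) ^ (q - 1) * ∫⁻ y, K y * F (x - y) ^ q
        ≤ 1 ^ (q - 1) * ∫⁻ y, B * F (x - y) ^ q := by
          gcongr with y
          exact hB y
      _ = B * A := by
          rw [ENNReal.one_rpow, one_mul, lintegral_const_mul]
          · rw [lintegral_sub_left_eq_self (fun y => F y ^ q) x]
          · exact (hF.comp (measurable_const.sub measurable_id)).pow_const _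
  have hq' : ∫⁻ x, (∫⁻ y, K y * F (x - y)) ^ q ≤ A := by
    refine (conv_Lq hq hK hF).trans ?_
    calc (∫⁻ y, K y) ^ q * A ≤ 1 ^ q * A := by gcongr
      _ = A := by simp
  have hmP : Measurable fun x => ∫⁻ y, K y * F (x - y) :=
    Measurable.lintegral_prod_right' (f := fun p : Euc n × Euc n => K p.2 * F (p.1 - p.2))
      ((hK.comp measurable_snd).mul (hF.comp (measurable_fst.sub measurable_snd)))
  have hmain : ∫⁻ x, (∫⁻ y, K y * F (x - y)) ^ r ≤ ((B * A) ^ (1 / q)) ^ (r - q) * A := by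
    calc ∫⁻ x, (∫⁻ y, K y * F (x - y)) ^ r
        = ∫⁻ x, (∫⁻ y, K y * F (x - y)) ^ (r - q) * (∫⁻ y, K y * F (x - y)) ^ q := by
          congr 1; ext x
          rw [← ENNReal.rpow_add_of_nonneg _ _ (by linarith) hq0.le]; congr 1; ring
      _ ≤ ∫⁻ x, ((B * A) ^ (1 / q)) ^ (r - q) * (∫⁻ y, K y * F (x - y)) ^ q := by
          gcongr with x
          · exact hsup x
      _ = ((B * A) ^ (1 / q)) ^ (r - q) * ∫⁻ x, (∫⁻ y, K y * F (x - y)) ^ q := by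
          rw [lintegral_const_mul _ (hmP.pow_const _)]
      _ ≤ _ := by gcongr
  calc (∫⁻ x, (∫⁻ y, K y * F (x - y)) ^ r) ^ (1 / r)
      ≤ (((B * A) ^ (1 / q)) ^ (r - q) * A) ^ (1 / r) := by gcongr
    _ = _ := by
      have hd : 0 ≤ 1 / q - 1 / r := by
        rw [sub_nonneg]; exact one_div_le_one_div_of_le hq0 hqr
      rw [← ENNReal.rpow_mul, ENNReal.mul_rpow_of_nonneg _ _ (by positivity), ← ENNReal.rpow_mul]
      have e : 1 / q * (r - q) * (1 / r) = 1 / q - 1 / r := by field_simp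
      rw [e, ENNReal.mul_rpow_of_nonneg _ _ hd, mul_assoc,
        ← ENNReal.rpow_add_of_nonneg _ _ hd (by positivity)]
      congr 2; ring

end

end IPE

namespace IPE
open scoped SchwartzMap

noncomputable section

/-- The heat kernel (multiplier `exp (-t |ξ|^2)`). -/
def hk {n : ℕ} (t : ℝ) (y : Euc n) : ℝ :=
  (Real.pi / t) ^ ((n : ℝ) / 2) * Real.exp (-(Real.pi ^ 2 / t) * ‖y‖ ^ 2)

lemma hk_nonneg {n : ℕ} {t : ℝ} (ht : 0 < t) (y : Euc n) : 0 ≤ hk t y := by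
  unfold hk; positivity

lemma hk_le {n : ℕ} {t : ℝ} (ht : 0 < t) (y : Euc n) : hk t y ≤ (Real.pi / t) ^ ((n : ℝ) / 2) := by
  unfold hk
  have : Real.exp (-(Real.pi ^ 2 / t) * ‖y‖ ^ 2) ≤ 1 := by
    rw [Real.exp_le_one_iff]
    have : 0 ≤ (Real.pi ^ 2 / t) * ‖y‖ ^ 2 := by positivity
    linarith
  exact mul_le_of_le_one_right (by positivity) this

lemma continuous_hk {n : ℕ} (t : ℝ) : Continuous (hk t : Euc n → ℝ) := by
  unfold hk; fun_prop

lemma measurable_hk {n : ℕ} : Measurable (Function.uncurry (hk : ℝ → Euc n → ℝ)) := by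
  unfold Function.uncurry hk; fun_prop

lemma integrable_hk {n : ℕ} {t : ℝ} (ht : 0 < t) : Integrable (hk t : Euc n → ℝ) := by
  unfold hk
  refine Integrable.const_mul ?_ _
  have h := GaussianFourier.integrable_cexp_neg_mul_sq_norm_add (V := Euc n)
    (b := ((Real.pi ^ 2 / t : ℝ) : ℂ)) (by rw [Complex.ofReal_re]; positivity) 0 0
  have := h.re
  refine this.congr (Filter.Eventually.of_forall fun y => ?_)
  simp only [zero_mul, add_zero]
  have : (-((Real.pi ^ 2 / t : ℝ) : ℂ) * (‖y‖ : ℂ) ^ 2) = ((-(Real.pi ^ 2 / t) * ‖y‖ ^ 2 : ℝ) : ℂ) := by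
    push_cast; ring
  rw [this, ← Complex.ofReal_exp]; rfl

lemma hk_fourier {n : ℕ} {t : ℝ} (ht : 0 < t) (ξ : Euc n) :
    ∫ y, (hk t y : ℂ) * ch (-(inner ℝ y ξ)) = ((Real.exp (-t * ‖ξ‖ ^ 2) : ℝ) : ℂ) := by
  have h := fourier_gaussian_innerProductSpace (V := Euc n)
    (b := ((Real.pi ^ 2 / t : ℝ) : ℂ)) (by rw [Complex.ofReal_re]; positivity) ξ
  rw [Real.fourier_eq'] at h
  have e1 : ∀ y : Euc n, (hk t y : ℂ) * ch (-(inner ℝ y ξ)) =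
      (((Real.pi / t) ^ ((n : ℝ) / 2) : ℝ) : ℂ) * (Complex.exp (((-2 * Real.pi * inner ℝ y ξ : ℝ) : ℂ) * Complex.I) •
        Complex.exp (-((Real.pi ^ 2 / t : ℝ) : ℂ) * (‖y‖ : ℂ) ^ 2)) := by
    intro y
    unfold hk ch
    push_cast
    rw [smul_eq_mul]
    have : 2 * (Real.pi : ℂ) * -((inner ℝ y ξ : ℝ) : ℂ) * Complex.I = -2 * (Real.pi : ℂ) * ((inner ℝ y ξ : ℝ) : ℂ) * Complex.I := by ring
    rw [this]; ring
  simp_rw [e1]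
  rw [integral_const_mul, h]
  have hpt : (0:ℝ) ≤ Real.pi / (Real.pi ^ 2 / t) := by positivity
  have e2 : ((Real.pi : ℂ) / ((Real.pi ^ 2 / t : ℝ) : ℂ)) ^ ((Module.finrank ℝ (Euc n) : ℂ) / 2) =
      (((Real.pi / (Real.pi ^ 2 / t)) ^ ((n : ℝ) / 2) : ℝ) : ℂ) := by
    rw [Complex.ofReal_cpow hpt]
    simp
  rw [e2, ← mul_assoc, ← Complex.ofReal_mul, ← Real.mul_rpow (by positivity) (by positivity)]
  have e3 : Real.pi / t * (Real.pi / (Real.pi ^ 2 / t)) = 1 := by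
    field_simp
  rw [e3, Real.one_rpow, Complex.ofReal_one, one_mul, Complex.ofReal_exp]
  congr 1
  push_cast
  have : (Real.pi : ℂ) ≠ 0 := by exact_mod_cast Real.pi_ne_zero
  have : (t : ℂ) ≠ 0 := by exact_mod_cast ht.ne'
  field_simp

lemma integral_hk {n : ℕ} {t : ℝ} (ht : 0 < t) : ∫ y : Euc n, hk t y = 1 := by
  have h := hk_fourier (n := n) ht 0
  simp only [inner_zero_right, neg_zero, ch_zero, mul_one, norm_zero] at h
  rw [integral_complex_ofReal] at h
  have h' := Complex.ofReal_injective h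
  rw [h']; simp

lemma lintegral_hk {n : ℕ} {t : ℝ} (ht : 0 < t) : ∫⁻ y : Euc n, ENNReal.ofReal (hk t y) = 1 := by
  rw [← ofReal_integral_eq_lintegral_ofReal (integrable_hk ht)
    (Filter.Eventually.of_forall fun y => hk_nonneg ht y), integral_hk ht, ENNReal.ofReal_one]

lemma hk_two {n : ℕ} {t : ℝ} (ht : 0 < t) (y : Euc n) :
    (Real.pi / t) ^ ((n : ℝ) / 2) * Real.exp (-(Real.pi ^ 2 / t) * ‖y‖ ^ 2 / 2) =
      2 ^ ((n : ℝ) / 2) * hk (2 * t) y := by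
  unfold hk
  rw [← mul_assoc, ← Real.mul_rpow (by norm_num) (by positivity)]
  congr 2
  · field_simp
  · field_simp

lemma hk_moment {n : ℕ} {t θ : ℝ} (ht : 0 < t) (hθ : 0 ≤ θ) (hθ2 : θ ≤ 2) (y : Euc n) :
    ‖y‖ ^ θ * hk t y ≤ t ^ (θ / 2) * 2 ^ ((n : ℝ) / 2) * hk (2 * t) y := by
  rw [mul_assoc, ← hk_two ht]
  unfold hk
  set v := ‖y‖ ^ 2 / t with hv
  have hv0 : 0 ≤ v := by positivity
  have e1 : ‖y‖ ^ θ = t ^ (θ / 2) * v ^ (θ / 2) := by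
    rw [← Real.mul_rpow ht.le hv0, hv, mul_div_cancel₀ _ ht.ne', ← Real.rpow_natCast,
      ← Real.rpow_mul (norm_nonneg _)]
    congr 1; push_cast; ring
  have e2 : v ^ (θ / 2) ≤ Real.exp v := by
    rcases le_total v 1 with h | h
    · exact (Real.rpow_le_one hv0 h (by linarith)).trans (Real.one_le_exp hv0)
    · calc v ^ (θ / 2) ≤ v ^ (1 : ℝ) := Real.rpow_le_rpow_of_exponent_le h (by linarith)
        _ = v := Real.rpow_one _
        _ ≤ Real.exp v := by linarith [Real.add_one_le_exp v]
  have e3 : Real.exp v * Real.exp (-(Real.pi ^ 2 / t) * ‖y‖ ^ 2) ≤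
      Real.exp (-(Real.pi ^ 2 / t) * ‖y‖ ^ 2 / 2) := by
    rw [← Real.exp_add]
    apply Real.exp_le_exp.2
    have : (Real.pi ^ 2 / t) * ‖y‖ ^ 2 = Real.pi ^ 2 * v := by rw [hv]; ring
    rw [neg_mul, this]
    have h9 : (2:ℝ) ≤ Real.pi ^ 2 := by nlinarith [Real.pi_gt_three]
    nlinarith [mul_le_mul_of_nonneg_right h9 hv0]
  rw [e1]
  calc t ^ (θ / 2) * v ^ (θ / 2) * ((Real.pi / t) ^ ((n : ℝ) / 2) * Real.exp (-(Real.pi ^ 2 / t) * ‖y‖ ^ 2))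
      ≤ t ^ (θ / 2) * Real.exp v * ((Real.pi / t) ^ ((n : ℝ) / 2) * Real.exp (-(Real.pi ^ 2 / t) * ‖y‖ ^ 2)) := by
        gcongr
    _ = t ^ (θ / 2) * ((Real.pi / t) ^ ((n : ℝ) / 2) * (Real.exp v * Real.exp (-(Real.pi ^ 2 / t) * ‖y‖ ^ 2))) := by ring
    _ ≤ _ := by gcongr

lemma lintegral_hk_moment {n : ℕ} {t θ : ℝ} (ht : 0 < t) (hθ : 0 ≤ θ) (hθ2 : θ ≤ 2) :
    ∫⁻ y : Euc n, ENNReal.ofReal (‖y‖ ^ θ) * ENNReal.ofReal (hk t y) ≤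
      ENNReal.ofReal (t ^ (θ / 2) * 2 ^ ((n : ℝ) / 2)) := by
  calc ∫⁻ y : Euc n, ENNReal.ofReal (‖y‖ ^ θ) * ENNReal.ofReal (hk t y)
      ≤ ∫⁻ y : Euc n, ENNReal.ofReal (t ^ (θ / 2) * 2 ^ ((n : ℝ) / 2)) * ENNReal.ofReal (hk (2 * t) y) := by
        refine lintegral_mono fun y => ?_
        rw [← ENNReal.ofReal_mul (by positivity), ← ENNReal.ofReal_mul (by positivity)]
        exact ENNReal.ofReal_le_ofReal (hk_moment ht hθ hθ2 y)
    _ = _ := by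
        rw [lintegral_const_mul _ (continuous_hk _).measurable.ennreal_ofReal,
          lintegral_hk (by positivity), mul_one]

lemma exp_sq_diff {A B : ℝ} (hA : 0 ≤ A) (hAB : A ≤ B) :
    Real.exp (-A ^ 2) - Real.exp (-B ^ 2) ≤ 3 * (B - A) * Real.exp (-A ^ 2 / 2) := by
  have hpos : 0 < Real.exp (-A ^ 2 / 2) := Real.exp_pos _
  have e1 : Real.exp (-A ^ 2) = Real.exp (-A ^ 2 / 2) * Real.exp (-A ^ 2 / 2) := by
    rw [← Real.exp_add]; congr 1; ring
  have hle1 : Real.exp (-A ^ 2 / 2) ≤ 1 := by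
    rw [Real.exp_le_one_iff]; nlinarith
  rcases le_total 1 (B - A) with h | h
  · have : 0 < Real.exp (-B ^ 2) := Real.exp_pos _
    nlinarith
  · have e2 : Real.exp (-B ^ 2) = Real.exp (-A ^ 2) * Real.exp (-(B ^ 2 - A ^ 2)) := by
      rw [← Real.exp_add]; congr 1; ring
    have e3 : 1 - (B ^ 2 - A ^ 2) ≤ Real.exp (-(B ^ 2 - A ^ 2)) := by
      linarith [Real.add_one_le_exp (-(B ^ 2 - A ^ 2))]
    have e4 : Real.exp (-A ^ 2 / 2) * (2 * A + 1) ≤ 3 := by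
      have h1 : 1 + A ^ 2 / 2 ≤ Real.exp (A ^ 2 / 2) := by linarith [Real.add_one_le_exp (A ^ 2 / 2)]
      have h2 : Real.exp (-A ^ 2 / 2) * Real.exp (A ^ 2 / 2) = 1 := by
        rw [← Real.exp_add]; simp [neg_div]
      have h3 : 2 * A + 1 ≤ 3 * Real.exp (A ^ 2 / 2) := by nlinarith [sq_nonneg (A - 1)]
      nlinarith
    have e5 : B ^ 2 - A ^ 2 ≤ (B - A) * (2 * A + 1) := by nlinarith
    rw [e2, e1]
    set X := Real.exp (-A ^ 2 / 2)
    have e6 : X * X * (1 - Real.exp (-(B ^ 2 - A ^ 2))) ≤ X * X * ((B - A) * (2 * A + 1)) := by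
      gcongr; linarith
    have e7 : X * ((B - A) * (X * (2 * A + 1))) ≤ X * ((B - A) * 3) := by
      gcongr
    nlinarith

lemma exp_sq_diff_abs {A B : ℝ} (hA : 0 ≤ A) (hB : 0 ≤ B) :
    |Real.exp (-A ^ 2) - Real.exp (-B ^ 2)| ≤
      3 * |A - B| * (Real.exp (-A ^ 2 / 2) + Real.exp (-B ^ 2 / 2)) := by
  have h1 := Real.exp_pos (-A ^ 2 / 2)
  have h2 := Real.exp_pos (-B ^ 2 / 2)
  rcases le_total A B with h | h
  · have := exp_sq_diff hA h
    have h3 : Real.exp (-B ^ 2) ≤ Real.exp (-A ^ 2) := Real.exp_le_exp.2 (by nlinarith)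
    rw [abs_of_nonneg (by linarith), abs_sub_comm, abs_of_nonneg (by linarith)]
    nlinarith
  · have := exp_sq_diff hB h
    have h3 : Real.exp (-A ^ 2) ≤ Real.exp (-B ^ 2) := Real.exp_le_exp.2 (by nlinarith)
    rw [abs_sub_comm, abs_of_nonneg (by linarith), abs_of_nonneg (by linarith)]
    nlinarith

lemma hk_diff {n : ℕ} {t : ℝ} (ht : 0 < t) (y z : Euc n) :
    |hk t z - hk t (z - y)| ≤ 3 * Real.pi * 2 ^ ((n : ℝ) / 2) * (‖y‖ / Real.sqrt t) *
      (hk (2 * t) z + hk (2 * t) (z - y)) := by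
  have hs : 0 < Real.sqrt t := Real.sqrt_pos.2 ht
  have hss : Real.sqrt t ^ 2 = t := Real.sq_sqrt ht.le
  have e : ∀ w : Euc n, -(Real.pi ^ 2 / t) * ‖w‖ ^ 2 = -(Real.pi * ‖w‖ / Real.sqrt t) ^ 2 := by
    intro w; rw [div_pow, mul_pow, hss]; ring
  have h := exp_sq_diff_abs (A := Real.pi * ‖z‖ / Real.sqrt t) (B := Real.pi * ‖z - y‖ / Real.sqrt t)
    (by positivity) (by positivity)
  rw [← e, ← e] at h
  have hAB : |Real.pi * ‖z‖ / Real.sqrt t - Real.pi * ‖z - y‖ / Real.sqrt t| ≤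
      Real.pi * (‖y‖ / Real.sqrt t) := by
    rw [← sub_div, ← mul_sub, abs_div, abs_mul, abs_of_pos Real.pi_pos, abs_of_pos hs, mul_div_assoc]
    gcongr
    have := abs_norm_sub_norm_le z (z - y)
    simpa using this
  have k1 := hk_two ht z
  have k2 := hk_two ht (z - y)
  have : hk t z - hk t (z - y) = (Real.pi / t) ^ ((n : ℝ) / 2) *
    (Real.exp (-(Real.pi ^ 2 / t) * ‖z‖ ^ 2) - Real.exp (-(Real.pi ^ 2 / t) * ‖z - y‖ ^ 2)) := by
    unfold hk; ring
  rw [this, abs_mul, abs_of_pos (by positivity)]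
  calc _ ≤ (Real.pi / t) ^ ((n : ℝ) / 2) * (3 * (Real.pi * (‖y‖ / Real.sqrt t)) * (Real.exp (-(Real.pi ^ 2 / t) * ‖z‖ ^ 2 / 2) +
      Real.exp (-(Real.pi ^ 2 / t) * ‖z - y‖ ^ 2 / 2))) := by
        gcongr
        refine h.trans ?_
        gcongr
    _ = 3 * (Real.pi * (‖y‖ / Real.sqrt t)) * ((Real.pi / t) ^ ((n : ℝ) / 2) * Real.exp (-(Real.pi ^ 2 / t) * ‖z‖ ^ 2 / 2) +
      (Real.pi / t) ^ ((n : ℝ) / 2) * Real.exp (-(Real.pi ^ 2 / t) * ‖z - y‖ ^ 2 / 2)) := by ring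
    _ = _ := by rw [k1, k2]; ring

/-- `L^1` modulus of continuity of the heat kernel. -/
lemma lintegral_hk_diff {n : ℕ} {σ : ℝ} (h0 : 0 ≤ σ) (h1 : σ ≤ 1) :
    ∃ C : ℝ, 0 < C ∧ ∀ t : ℝ, 0 < t → ∀ y : Euc n,
      ∫⁻ z : Euc n, ENNReal.ofReal |hk t z - hk t (z - y)| ≤
        ENNReal.ofReal (C * ‖y‖ ^ σ * t ^ (-(σ / 2))) := by
  refine ⟨6 * Real.pi * 2 ^ ((n : ℝ) / 2), by positivity, fun t ht y => ?_⟩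
  set D : ℝ := 6 * Real.pi * 2 ^ ((n : ℝ) / 2) with hD
  have hs : 0 < Real.sqrt t := Real.sqrt_pos.2 ht
  have hD2 : 2 ≤ D := by
    have : (1:ℝ) ≤ 2 ^ ((n : ℝ) / 2) := Real.one_le_rpow (by norm_num) (by positivity)
    rw [hD]; nlinarith [Real.pi_gt_three]
  have b1 : ∫⁻ z : Euc n, ENNReal.ofReal |hk t z - hk t (z - y)| ≤ 2 := by
    calc ∫⁻ z : Euc n, ENNReal.ofReal |hk t z - hk t (z - y)|
        ≤ ∫⁻ z : Euc n, (ENNReal.ofReal (hk t z) + ENNReal.ofReal (hk t (z - y))) := by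
          gcongr with z
          rw [← ENNReal.ofReal_add (hk_nonneg ht _) (hk_nonneg ht _)]
          apply ENNReal.ofReal_le_ofReal
          refine (abs_sub _ _).trans ?_
          rw [abs_of_nonneg (hk_nonneg ht _), abs_of_nonneg (hk_nonneg ht _)]
      _ = 2 := by
          rw [lintegral_add_left (continuous_hk _).measurable.ennreal_ofReal,
            lintegral_sub_right_eq_self (fun z => ENNReal.ofReal (hk t z)) y, lintegral_hk ht]
          norm_num
  have b2 : ∫⁻ z : Euc n, ENNReal.ofReal |hk t z - hk t (z - y)| ≤ ENNReal.ofReal (D * (‖y‖ / Real.sqrt t)) := by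
    calc ∫⁻ z : Euc n, ENNReal.ofReal |hk t z - hk t (z - y)|
        ≤ ∫⁻ z : Euc n, ENNReal.ofReal (3 * Real.pi * 2 ^ ((n : ℝ) / 2) * (‖y‖ / Real.sqrt t)) * (ENNReal.ofReal (hk (2 * t) z) + ENNReal.ofReal (hk (2 * t) (z - y))) := by
          gcongr with z
          rw [← ENNReal.ofReal_add (hk_nonneg (by positivity) _) (hk_nonneg (by positivity) _),
            ← ENNReal.ofReal_mul (by positivity)]
          exact ENNReal.ofReal_le_ofReal (hk_diff ht y z)
      _ = _ := by
          rw [lintegral_const_mul, lintegral_add_left (continuous_hk _).measurable.ennreal_ofReal,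
            lintegral_sub_right_eq_self (fun z => ENNReal.ofReal (hk (2 * t) z)) y, lintegral_hk (by positivity)]
          · rw [show (1 + 1 : ℝ≥0∞) = ENNReal.ofReal 2 by norm_num, ← ENNReal.ofReal_mul (by positivity)]
            congr 1; rw [hD]; ring
          · have := continuous_hk (n := n) (2 * t)
            fun_prop
  have e : D * ‖y‖ ^ σ * t ^ (-(σ / 2)) = D * (‖y‖ / Real.sqrt t) ^ σ := by
    rw [Real.div_rpow (norm_nonneg _) hs.le, Real.sqrt_eq_rpow, ← Real.rpow_mul ht.le,
      Real.rpow_neg ht.le, show 1 / 2 * σ = σ / 2 by ring]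
    ring
  rw [e]
  set v := ‖y‖ / Real.sqrt t with hv
  have hv0 : 0 ≤ v := by positivity
  rcases le_total v 1 with h | h
  · refine b2.trans (ENNReal.ofReal_le_ofReal ?_)
    gcongr
    rcases eq_or_lt_of_le hv0 with h' | h'
    · rw [← h']; positivity
    · calc v = v ^ (1:ℝ) := (Real.rpow_one _).symm
        _ ≤ v ^ σ := Real.rpow_le_rpow_of_exponent_ge h' h h1
  · refine b1.trans ?_
    rw [show (2 : ℝ≥0∞) = ENNReal.ofReal 2 by norm_num]
    apply ENNReal.ofReal_le_ofReal
    have : 1 ≤ v ^ σ := Real.one_le_rpow h h0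
    nlinarith

/-- The heat semigroup. -/
def heat {n : ℕ} (f : 𝓢(Euc n, ℂ)) (t : ℝ) (x : Euc n) : ℂ :=
  ∫ ξ, ch (inner ℝ ξ x) * (((Real.exp (-t * ‖ξ‖ ^ 2) : ℝ) : ℂ) * 𝓕 f ξ)

lemma measurable_heat {n : ℕ} (f : 𝓢(Euc n, ℂ)) :
    Measurable (Function.uncurry (heat f)) := by
  have h1 := continuous_ch
  have h3 := (𝓕 f).continuous
  have : Continuous (fun q : (ℝ × Euc n) × Euc n => ch (inner ℝ q.2 q.1.2) *
      (((Real.exp (-q.1.1 * ‖q.2‖ ^ 2) : ℝ) : ℂ) * 𝓕 f q.2)) := by fun_prop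
  have := (this.stronglyMeasurable).integral_prod_right' (ν := (volume : Measure (Euc n)))
  exact this.measurable

lemma heat_eq {n : ℕ} (f : 𝓢(Euc n, ℂ)) {t : ℝ} (ht : 0 < t) (x : Euc n) :
    heat f t x = ∫ y, (hk t y : ℂ) * f (x - y) := by
  have e : ∀ y, (hk t y : ℂ) * f (x - y) = ∫ ξ, (hk t y : ℂ) * (ch (inner ℝ ξ x) * (ch (-(inner ℝ y ξ)) * 𝓕 f ξ)) := by
    intro y
    rw [integral_const_mul, ← tr_apply y f x, inversion]
    simp_rw [fourier_tr]
  simp_rw [e]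
  rw [integral_integral_swap]
  · unfold heat
    congr 1; ext ξ
    rw [← hk_fourier ht, ← integral_mul_const, ← integral_const_mul]
    congr 1; ext y; ring
  · have h := (integrable_hk (n := n) ht).ofReal (𝕜 := ℂ) |>.mul_prod ((𝓕 f).integrable (μ := volume))
    refine h.mono ?_ (Filter.Eventually.of_forall fun p => ?_)
    · apply Continuous.aestronglyMeasurable
      have h1 := continuous_ch
      have h3 := (𝓕 f).continuous
      have h4 := continuous_hk (n := n) t
      unfold Function.uncurry
      fun_prop
    · simp [Function.uncurry, norm_ch]

lemma heat_enorm_le {n : ℕ} (f : 𝓢(Euc n, ℂ)) {t : ℝ} (ht : 0 < t) (x : Euc n) :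
    ‖heat f t x‖ₑ ≤ ∫⁻ y, ENNReal.ofReal (hk t y) * ‖f (x - y)‖ₑ := by
  rw [heat_eq f ht]
  refine (enorm_integral_le_lintegral_enorm _).trans (le_of_eq ?_)
  congr 1; ext y
  rw [enorm_mul]
  congr 1
  rw [← ofReal_norm, Complex.norm_real, Real.norm_of_nonneg (hk_nonneg ht y)]

lemma integrable_hk_mul {n : ℕ} (f : 𝓢(Euc n, ℂ)) {t : ℝ} (ht : 0 < t) (x : Euc n) :
    Integrable (fun y => (hk t y : ℂ) * f (x - y)) := by
  refine Integrable.bdd_mul (c := (Real.pi / t) ^ ((n : ℝ) / 2)) ?_ ?_ ?_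
  · exact (f.integrable (μ := volume)).comp_sub_left x
  · have h4 := continuous_hk (n := n) t
    exact Continuous.aestronglyMeasurable (by fun_prop)
  · refine Filter.Eventually.of_forall fun y => ?_
    rw [Complex.norm_real, Real.norm_of_nonneg (hk_nonneg ht y)]
    exact hk_le ht y

lemma heat_dl_enorm_le {n : ℕ} (f : 𝓢(Euc n, ℂ)) {t : ℝ} (ht : 0 < t) (y x : Euc n) :
    ‖heat (dl y f) t x‖ₑ ≤ ∫⁻ z, ENNReal.ofReal |hk t z - hk t (z - y)| * ‖f (x - z)‖ₑ := by
  have e : heat (dl y f) t x = ∫ z, ((hk t z - hk t (z - y) : ℝ) : ℂ) * f (x - z) := by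
    rw [heat_eq _ ht]
    have e1 : ∀ z, (hk t z : ℂ) * (dl y f) (x - z) = (hk t z : ℂ) * f (x - z) - (hk t z : ℂ) * f (x - y - z) := by
      intro z
      rw [dl_apply, mul_sub, show x - z - y = x - y - z by abel]
    simp_rw [e1]
    rw [integral_sub (integrable_hk_mul f ht x) (integrable_hk_mul f ht (x - y))]
    have e2 : ∫ z, (hk t z : ℂ) * f (x - y - z) = ∫ z, (hk t (z - y) : ℂ) * f (x - z) := by
      rw [← integral_sub_right_eq_self _ y]
      congr 1; ext z
      rw [show x - y - (z - y) = x - z by abel]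
    have i2 : Integrable (fun z => (hk t (z - y) : ℂ) * f (x - z)) := by
      have := (integrable_hk_mul f ht (x - y)).comp_sub_right y
      refine this.congr (Filter.Eventually.of_forall fun z => ?_)
      simp only
      rw [show x - y - (z - y) = x - z by abel]
    rw [e2, ← integral_sub (integrable_hk_mul f ht x) i2]
    congr 1; ext z
    push_cast; ring
  rw [e]
  refine (enorm_integral_le_lintegral_enorm _).trans (le_of_eq ?_)
  congr 1; ext z
  rw [enorm_mul]
  congr 1
  rw [← ofReal_norm, Complex.norm_real, Real.norm_eq_abs]

end

end IPE

namespace IPE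
open scoped SchwartzMap

noncomputable section

/-- Weight in the subordination formula for negative powers. -/
def wg (γ t : ℝ) : ℝ := (Real.Gamma (γ / 2))⁻¹ * (Real.exp (-t) * t ^ (γ / 2 - 1))

lemma measurable_wg (γ : ℝ) : Measurable (wg γ) := by
  unfold wg; fun_prop

lemma integrableOn_wg {γ : ℝ} (hγ : 0 < γ) : IntegrableOn (wg γ) (Set.Ioi 0) := by
  unfold wg
  exact (Real.GammaIntegral_convergent (by positivity)).const_mul _

lemma wg_nonneg {γ : ℝ} (hγ : 0 < γ) {t : ℝ} (ht : 0 < t) : 0 ≤ wg γ t := by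
  unfold wg
  have := Real.Gamma_pos_of_pos (show 0 < γ / 2 by positivity)
  positivity

lemma wg_sym {n : ℕ} {γ : ℝ} (hγ : 0 < γ) (ξ : Euc n) :
    ∫ t in Set.Ioi (0:ℝ), wg γ t * Real.exp (-t * ‖ξ‖ ^ 2) = sym (-γ) ξ := by
  have h := Real.integral_rpow_mul_exp_neg_mul_Ioi (show 0 < γ / 2 by positivity)
    (show 0 < 1 + ‖ξ‖ ^ 2 by positivity)
  have hG := Real.Gamma_pos_of_pos (show 0 < γ / 2 by positivity)
  have e : ∀ t : ℝ, wg γ t * Real.exp (-t * ‖ξ‖ ^ 2) = (Real.Gamma (γ / 2))⁻¹ *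
      (t ^ (γ / 2 - 1) * Real.exp (-((1 + ‖ξ‖ ^ 2) * t))) := by
    intro t
    unfold wg
    rw [show -((1 + ‖ξ‖ ^ 2) * t) = -t + -t * ‖ξ‖ ^ 2 by ring, Real.exp_add]
    ring
  simp_rw [e]
  rw [integral_const_mul, h]
  unfold sym
  rw [neg_div, Real.rpow_neg (by positivity), one_div, Real.inv_rpow (by positivity)]
  field_simp

lemma J_neg_apply {n : ℕ} {γ : ℝ} (hγ : 0 < γ) (f : 𝓢(Euc n, ℂ)) (x : Euc n) :
    J (-γ) f x = ∫ t in Set.Ioi (0:ℝ), (wg γ t : ℂ) * heat f t x := by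
  rw [J_apply]
  unfold heat
  simp_rw [← integral_const_mul]
  rw [integral_integral_swap]
  · congr 1; ext ξ
    rw [← wg_sym hγ, ← integral_complex_ofReal, ← integral_mul_const, ← integral_const_mul]
    congr 1; ext t
    push_cast; ring
  · have h := (integrableOn_wg hγ).ofReal (𝕜 := ℂ) |>.mul_prod ((𝓕 f).integrable (μ := volume))
    refine h.mono ?_ ?_
    · apply Measurable.aestronglyMeasurable
      have h1 := continuous_ch.measurable
      have h3 := (𝓕 f).continuous.measurable
      have h4 := measurable_wg γ
      unfold Function.uncurry
      fun_prop
    · rw [← Measure.restrict_univ (μ := (volume : Measure (Euc n))), Measure.prod_restrict]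
      refine (ae_restrict_mem (measurableSet_Ioi.prod MeasurableSet.univ)).mono ?_
      rintro ⟨t, ξ⟩ ⟨ht, -⟩
      simp only [Function.uncurry, norm_mul, norm_ch, one_mul, Complex.norm_real]
      have ht' : (0:ℝ) < t := ht
      have : ‖Real.exp (-t * ‖ξ‖ ^ 2)‖ ≤ 1 := by
        rw [Real.norm_of_nonneg (Real.exp_pos _).le, Real.exp_le_one_iff]
        nlinarith [sq_nonneg ‖ξ‖, mul_nonneg ht'.le (sq_nonneg ‖ξ‖)]
      have e : ‖(RCLike.ofReal (wg γ t) : ℂ)‖ = ‖wg γ t‖ := RCLike.norm_ofReal _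
      rw [e]
      exact mul_le_mul_of_nonneg_left (mul_le_of_le_one_left (norm_nonneg (𝓕 f ξ)) this)
        (norm_nonneg (wg γ t))

lemma lintegral_wg_pow {γ τ : ℝ} (hγ : 0 < γ) (hτ : τ < γ / 2) :
    ∫⁻ t in Set.Ioi (0:ℝ), ENNReal.ofReal (wg γ t) * ENNReal.ofReal (t ^ (-τ)) ≠ ⊤ := by
  have hi := Real.GammaIntegral_convergent (show 0 < γ / 2 - τ by linarith)
  have hG := Real.Gamma_pos_of_pos (show 0 < γ / 2 by positivity)
  have h2 : IntegrableOn (fun t => (Real.Gamma (γ / 2))⁻¹ * (Real.exp (-t) * t ^ (γ / 2 - τ - 1))) (Set.Ioi 0) :=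
    hi.const_mul _
  have h3 := h2.lintegral_lt_top
  refine ne_of_lt (lt_of_le_of_lt (le_of_eq ?_) h3)
  apply setLIntegral_congr_fun measurableSet_Ioi
  intro t ht
  have ht' : (0:ℝ) < t := ht
  simp only
  rw [← ENNReal.ofReal_mul (wg_nonneg hγ ht')]
  congr 1
  unfold wg
  rw [show γ / 2 - τ - 1 = (γ / 2 - 1) + (-τ) by ring, Real.rpow_add ht']
  ring

/-- Master estimate for negative Bessel powers. -/
lemma J_neg_bound {n : ℕ} {γ τ r : ℝ} (hγ : 0 < γ) (hτ : τ < γ / 2) (hr : 1 ≤ r) :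
    ∃ C : ℝ≥0∞, C ≠ ⊤ ∧ ∀ (F : 𝓢(Euc n, ℂ)) (M : ℝ≥0∞),
      (∀ t : ℝ, 0 < t → eLpNorm (heat F t) (ENNReal.ofReal r) volume ≤ M * ENNReal.ofReal (t ^ (-τ))) →
      N r (J (-γ) F) ≤ C * M := by
  refine ⟨_, lintegral_wg_pow hγ hτ, fun F M hM => ?_⟩
  have hW : Measurable fun t => ENNReal.ofReal (wg γ t) := (measurable_wg γ).ennreal_ofReal
  refine (minkowskiN (ν := volume.restrict (Set.Ioi (0:ℝ))) hr (J (-γ) F)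
    (W := fun t => ENNReal.ofReal (wg γ t)) hW (G := heat F) (measurable_heat F) ?_).trans ?_
  · intro x
    rw [J_neg_apply hγ]
    refine (enorm_integral_le_lintegral_enorm _).trans (le_of_eq ?_)
    apply setLIntegral_congr_fun measurableSet_Ioi
    intro t ht
    simp only
    rw [enorm_mul, ← ofReal_norm, Complex.norm_real, Real.norm_of_nonneg (wg_nonneg hγ ht)]
  · rw [← lintegral_mul_const]
    · apply setLIntegral_mono
      · have : Measurable fun t : ℝ => ENNReal.ofReal (t ^ (-τ)) := by fun_prop
        exact (hW.mul this).mul_const _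
      · intro t ht
        calc _ ≤ ENNReal.ofReal (wg γ t) * (M * ENNReal.ofReal (t ^ (-τ))) := by
              gcongr; exact hM t ht
          _ = _ := by ring
    · have : Measurable fun t : ℝ => ENNReal.ofReal (t ^ (-τ)) := by fun_prop
      exact hW.mul this

/-- Sobolev embedding (strict inequality). -/
lemma sobolev {n : ℕ} {γ q r : ℝ} (hγ : 0 < γ) (hq : 1 ≤ q) (hqr : q ≤ r)
    (h : (n : ℝ) * (1 / q - 1 / r) < γ) :
    ∃ C : ℝ≥0∞, C ≠ ⊤ ∧ ∀ f : 𝓢(Euc n, ℂ), N r (J (-γ) f) ≤ C * N q f := by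
  have hr : 1 ≤ r := hq.trans hqr
  have hd : 0 ≤ 1 / q - 1 / r := by
    rw [sub_nonneg]; exact one_div_le_one_div_of_le (by linarith) hqr
  set δ := 1 / q - 1 / r with hδ
  obtain ⟨C, hC, hb⟩ := J_neg_bound (n := n) (γ := γ) (τ := (n : ℝ) / 2 * δ) hγ (by linarith) hr
  refine ⟨C * ENNReal.ofReal (Real.pi ^ ((n : ℝ) / 2 * δ)), ENNReal.mul_ne_top hC ENNReal.ofReal_ne_top, fun f => ?_⟩
  rw [mul_assoc]
  apply hb
  intro t ht
  rw [N_eq hr, N, N_eq hq]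
  calc (∫⁻ x, ‖heat f t x‖ₑ ^ r) ^ (1 / r)
      ≤ (∫⁻ x, (∫⁻ y, ENNReal.ofReal (hk t y) * ‖f (x - y)‖ₑ) ^ r) ^ (1 / r) := by
        gcongr with x
        exact heat_enorm_le f ht x
    _ ≤ (ENNReal.ofReal ((Real.pi / t) ^ ((n : ℝ) / 2))) ^ δ * (∫⁻ y, ‖f y‖ₑ ^ q) ^ (1 / q) :=
        conv_Lr (n := n) hq hqr (K := fun y => ENNReal.ofReal (hk t y)) (F := fun y => ‖f y‖ₑ)
          (continuous_hk _).measurable.ennreal_ofReal f.continuous.measurable.enorm _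
          (lintegral_hk ht).le (fun y => ENNReal.ofReal_le_ofReal (hk_le ht y))
    _ = _ := by
        rw [ENNReal.ofReal_rpow_of_nonneg (by positivity) hd, ← Real.rpow_mul (by positivity),
          Real.div_rpow Real.pi_pos.le ht.le, Real.rpow_neg ht.le, div_eq_mul_inv,
          ENNReal.ofReal_mul (by positivity)]
        ring

/-- Differences gain. -/
lemma diff_gain {n : ℕ} {γ σ q : ℝ} (h0 : 0 ≤ σ) (h1 : σ ≤ 1) (hσ : σ < γ) (hq : 1 ≤ q) :
    ∃ C : ℝ≥0∞, C ≠ ⊤ ∧ ∀ (f : 𝓢(Euc n, ℂ)) (y : Euc n),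
      N q (J (-γ) (dl y f)) ≤ C * ENNReal.ofReal (‖y‖ ^ σ) * N q f := by
  obtain ⟨D, hD, hdiff⟩ := lintegral_hk_diff (n := n) h0 h1
  obtain ⟨C, hC, hb⟩ := J_neg_bound (n := n) (γ := γ) (τ := σ / 2) (by linarith) (by linarith) hq
  refine ⟨C * ENNReal.ofReal D, ENNReal.mul_ne_top hC ENNReal.ofReal_ne_top, fun f y => ?_⟩
  have hq0 : 0 < q := by linarith
  rw [mul_assoc, mul_assoc]
  apply hb
  intro t ht
  rw [N_eq hq, N, N_eq hq]
  have hmK : Measurable fun z : Euc n => ENNReal.ofReal |hk t z - hk t (z - y)| := by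
    have := (continuous_hk (n := n) t).measurable
    have h2 : Measurable fun z : Euc n => hk t (z - y) := this.comp (measurable_id.sub_const y)
    exact (this.sub h2).abs.ennreal_ofReal
  calc (∫⁻ x, ‖heat (dl y f) t x‖ₑ ^ q) ^ (1 / q)
      ≤ (∫⁻ x, (∫⁻ z, ENNReal.ofReal |hk t z - hk t (z - y)| * ‖f (x - z)‖ₑ) ^ q) ^ (1 / q) := by
        gcongr with x
        exact heat_dl_enorm_le f ht y x
    _ ≤ ((∫⁻ z : Euc n, ENNReal.ofReal |hk t z - hk t (z - y)|) ^ q * ∫⁻ x, ‖f x‖ₑ ^ q) ^ (1 / q) := by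
        gcongr
        exact conv_Lq hq (K := fun z => ENNReal.ofReal |hk t z - hk t (z - y)|) (F := fun y => ‖f y‖ₑ)
          hmK f.continuous.measurable.enorm
    _ = (∫⁻ z : Euc n, ENNReal.ofReal |hk t z - hk t (z - y)|) * (∫⁻ x, ‖f x‖ₑ ^ q) ^ (1 / q) := by
        rw [ENNReal.mul_rpow_of_nonneg _ _ (by positivity), ← ENNReal.rpow_mul,
          mul_one_div_cancel hq0.ne', ENNReal.rpow_one]
    _ ≤ ENNReal.ofReal (D * ‖y‖ ^ σ * t ^ (-(σ / 2))) * (∫⁻ x, ‖f x‖ₑ ^ q) ^ (1 / q) := by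
        gcongr; exact hdiff t ht y
    _ = _ := by
        rw [ENNReal.ofReal_mul (by positivity), ENNReal.ofReal_mul (by positivity)]
        ring

/-- Contractivity: negative powers are bounded on `L^q`. -/
lemma J_neg_Lq {n : ℕ} {γ q : ℝ} (hγ : 0 ≤ γ) (hq : 1 ≤ q) :
    ∃ C : ℝ≥0∞, C ≠ ⊤ ∧ ∀ f : 𝓢(Euc n, ℂ), N q (J (-γ) f) ≤ C * N q f := by
  rcases eq_or_lt_of_le hγ with rfl | h
  · refine ⟨1, by simp, fun f => ?_⟩
    rw [neg_zero, J_zero, one_mul]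
  · exact sobolev h hq le_rfl (by simpa using h)

end

end IPE

namespace IPE
open scoped SchwartzMap

noncomputable section

/-- Lévy weight. -/
def wl (b t : ℝ) : ℝ := b / Real.Gamma (1 - b) * (Real.exp (-t) * t ^ (-1 - b))

lemma measurable_wl (b : ℝ) : Measurable (wl b) := by
  unfold wl; fun_prop

lemma wl_nonneg {b : ℝ} (hb : 0 < b) (hb1 : b < 1) {t : ℝ} (ht : 0 < t) : 0 ≤ wl b t := by
  unfold wl
  have := Real.Gamma_pos_of_pos (show 0 < 1 - b by linarith)
  positivity

lemma lintegral_wl_pow {b s : ℝ} (hb : 0 < b) (hb1 : b < 1) (hs : b < s) :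
    ∫⁻ t in Set.Ioi (0:ℝ), ENNReal.ofReal (wl b t) * ENNReal.ofReal (t ^ s) ≠ ⊤ := by
  have hi := Real.GammaIntegral_convergent (show 0 < s - b by linarith)
  have h2 : IntegrableOn (fun t => b / Real.Gamma (1 - b) * (Real.exp (-t) * t ^ (s - b - 1))) (Set.Ioi 0) :=
    hi.const_mul _
  have h3 := h2.lintegral_lt_top
  refine ne_of_lt (lt_of_le_of_lt (le_of_eq ?_) h3)
  apply setLIntegral_congr_fun measurableSet_Ioi
  intro t ht
  have ht' : (0:ℝ) < t := ht
  simp only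
  rw [← ENNReal.ofReal_mul (wl_nonneg hb hb1 ht')]
  congr 1
  unfold wl
  rw [show s - b - 1 = (-1 - b) + s by ring, Real.rpow_add ht']
  ring

/-- The Lévy–Khinchin formula for `(1+x)^b - 1`. -/
lemma levy {b x : ℝ} (hb : 0 < b) (hb1 : b < 1) (hx : 0 ≤ x) :
    ∫ t in Set.Ioi (0:ℝ), wl b t * (1 - Real.exp (-t * x)) = (1 + x) ^ b - 1 := by
  have hG := Real.Gamma_pos_of_pos (show 0 < 1 - b by linarith)
  have e1 : (1 + x) ^ b - 1 = ∫ z in (0:ℝ)..x, b * (1 + z) ^ (b - 1) := by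
    rw [intervalIntegral.integral_eq_sub_of_hasDerivAt (f := fun z => (1 + z) ^ b)]
    · simp
    · intro z hz
      rw [Set.uIcc_of_le hx] at hz
      have h := ((hasDerivAt_id z).const_add 1).rpow_const (p := b) (Or.inl (by simp only [id]; linarith [hz.1]))
      simpa using h
    · apply ContinuousOn.intervalIntegrable
      rw [Set.uIcc_of_le hx]
      intro z hz
      apply ContinuousAt.continuousWithinAt
      have : (1 + z) ≠ 0 := by linarith [hz.1]
      fun_prop (disch := simp [this])
  have e2 : ∀ z ∈ Set.Ioc 0 x, b * (1 + z) ^ (b - 1) =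
      ∫ t in Set.Ioi (0:ℝ), b / Real.Gamma (1 - b) * (Real.exp (-t) * t ^ (-b)) * Real.exp (-t * z) := by
    intro z hz
    have h := Real.integral_rpow_mul_exp_neg_mul_Ioi (show 0 < 1 - b by linarith)
      (show 0 < 1 + z by linarith [hz.1])
    have e : ∀ t : ℝ, b / Real.Gamma (1 - b) * (Real.exp (-t) * t ^ (-b)) * Real.exp (-t * z) =
        b / Real.Gamma (1 - b) * (t ^ (1 - b - 1) * Real.exp (-((1 + z) * t))) := by
      intro t
      rw [show -((1 + z) * t) = -t + -t * z by ring, Real.exp_add, show 1 - b - 1 = -b by ring]; ring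
    simp_rw [e]
    rw [integral_const_mul, h, one_div, Real.inv_rpow (by linarith [hz.1]), ← Real.rpow_neg (by linarith [hz.1]),
      show -(1 - b) = b - 1 by ring]
    field_simp
  rw [e1, intervalIntegral.integral_of_le hx, setIntegral_congr_fun measurableSet_Ioc e2,
    integral_integral_swap]
  · apply setIntegral_congr_fun measurableSet_Ioi
    intro t ht
    have ht' : (0:ℝ) < t := ht
    simp only
    rw [integral_const_mul, ← intervalIntegral.integral_of_le hx]
    have e3 : ∫ z in (0:ℝ)..x, Real.exp (-t * z) = (1 - Real.exp (-t * x)) / t := by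
      rw [intervalIntegral.integral_comp_mul_left (fun z => Real.exp z) (by linarith : -t ≠ 0), integral_exp]
      simp only [mul_zero, Real.exp_zero, smul_eq_mul]
      field_simp
      ring
    rw [e3]
    unfold wl
    rw [show -1 - b = -b - 1 by ring, Real.rpow_sub_one ht'.ne']
    ring
  · have hi : IntegrableOn (fun t => b / Real.Gamma (1 - b) * (Real.exp (-t) * t ^ (-b))) (Set.Ioi 0) := by
      have := (Real.GammaIntegral_convergent (show 0 < 1 - b by linarith)).const_mul (b / Real.Gamma (1 - b))
      rwa [show 1 - b - 1 = -b by ring] at this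
    have hc : IntegrableOn (fun _ : ℝ => (1:ℝ)) (Set.Ioc 0 x) := by
      simp
    have h := hc.mul_prod hi
    refine Integrable.mono h ?_ ?_
    · apply Measurable.aestronglyMeasurable
      unfold Function.uncurry
      fun_prop
    · rw [Measure.prod_restrict]
      refine (ae_restrict_mem (measurableSet_Ioc.prod measurableSet_Ioi)).mono ?_
      rintro ⟨z, t⟩ ⟨hz, ht⟩
      have ht' : (0:ℝ) < t := ht
      have hz' : (0:ℝ) < z := hz.1
      simp only [Function.uncurry, one_mul]
      rw [norm_mul]
      refine mul_le_of_le_one_right (norm_nonneg _) ?_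
      rw [Real.norm_of_nonneg (Real.exp_pos _).le, Real.exp_le_one_iff]
      nlinarith

/-- The base measure for the difference representation. -/
def nu (n : ℕ) : Measure (ℝ × Euc n) := ((volume : Measure ℝ).restrict (Set.Ioi 0)).prod volume

instance {n : ℕ} : SFinite (nu n) := by unfold nu; infer_instance

/-- The weight for the difference representation. -/
def W {n : ℕ} (β : ℝ) (q : ℝ × Euc n) : ℝ := wl (β / 2) q.1 * hk q.1 q.2

lemma measurable_W {n : ℕ} (β : ℝ) : Measurable (W β : ℝ × Euc n → ℝ) := by
  unfold W
  exact ((measurable_wl _).comp measurable_fst).mul measurable_hk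

lemma ae_nu {n : ℕ} : ∀ᵐ q ∂(nu n), 0 < q.1 := by
  unfold nu
  rw [← Measure.restrict_univ (μ := (volume : Measure (Euc n))), Measure.prod_restrict]
  refine (ae_restrict_mem (measurableSet_Ioi.prod MeasurableSet.univ)).mono ?_
  rintro ⟨t, ξ⟩ ⟨ht, -⟩
  exact ht

lemma W_nonneg {n : ℕ} {β : ℝ} (h0 : 0 < β) (h2 : β < 2) {q : ℝ × Euc n} (hq : 0 < q.1) : 0 ≤ W β q := by
  unfold W
  exact mul_nonneg (wl_nonneg (by linarith) (by linarith) hq) (hk_nonneg hq _)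

lemma lintegral_W {n : ℕ} {β θ : ℝ} (h0 : 0 < β) (hθ : β < θ) (hθ2 : θ ≤ 2) :
    ∫⁻ q : ℝ × Euc n, ENNReal.ofReal (W β q) * ENNReal.ofReal (‖q.2‖ ^ θ) ∂(nu n) ≠ ⊤ := by
  have hm : Measurable fun q : ℝ × Euc n => ENNReal.ofReal (W β q) * ENNReal.ofReal (‖q.2‖ ^ θ) := by
    have h := measurable_W (n := n) β
    have h2 : Measurable fun q : ℝ × Euc n => ‖q.2‖ ^ θ := by fun_prop
    exact h.ennreal_ofReal.mul h2.ennreal_ofReal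
  unfold nu
  rw [lintegral_prod _ hm.aemeasurable]
  have hfin := ENNReal.mul_ne_top (lintegral_wl_pow (b := β / 2) (s := θ / 2) (by linarith) (by linarith) (by linarith))
    (ENNReal.ofReal_ne_top (r := 2 ^ ((n : ℝ) / 2)))
  refine ne_top_of_le_ne_top hfin ?_
  rw [← lintegral_mul_const]
  · apply setLIntegral_mono
    · have h := measurable_wl (β / 2)
      have h2 : Measurable fun t : ℝ => t ^ (θ / 2) := by fun_prop
      exact (h.ennreal_ofReal.mul h2.ennreal_ofReal).mul_const _
    · intro t ht
      have ht' : (0:ℝ) < t := ht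
      have hw := wl_nonneg (b := β / 2) (by linarith) (by linarith) ht'
      calc ∫⁻ y : Euc n, ENNReal.ofReal (W β (t, y)) * ENNReal.ofReal (‖y‖ ^ θ)
          = ∫⁻ y : Euc n, ENNReal.ofReal (wl (β / 2) t) * (ENNReal.ofReal (‖y‖ ^ θ) * ENNReal.ofReal (hk t y)) := by
            congr 1; ext y
            unfold W
            rw [ENNReal.ofReal_mul hw]; ring
        _ = ENNReal.ofReal (wl (β / 2) t) * ∫⁻ y : Euc n, (ENNReal.ofReal (‖y‖ ^ θ) * ENNReal.ofReal (hk t y)) := by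
            rw [lintegral_const_mul]
            have h2 : Measurable fun q : Euc n => ‖q‖ ^ θ := by fun_prop
            exact h2.ennreal_ofReal.mul (continuous_hk _).measurable.ennreal_ofReal
        _ ≤ ENNReal.ofReal (wl (β / 2) t) * ENNReal.ofReal (t ^ (θ / 2) * 2 ^ ((n : ℝ) / 2)) := by
            gcongr
            exact lintegral_hk_moment ht' (by linarith) hθ2
        _ = _ := by
            rw [ENNReal.ofReal_mul (by positivity)]; ring
  · have h := measurable_wl (β / 2)
    have h2 : Measurable fun t : ℝ => t ^ (θ / 2) := by fun_prop
    exact h.ennreal_ofReal.mul h2.ennreal_ofReal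

lemma integrable_W {n : ℕ} {β θ : ℝ} (h0 : 0 < β) (hθ : β < θ) (hθ2 : θ ≤ 2) :
    Integrable (fun q : ℝ × Euc n => W β q * ‖q.2‖ ^ θ) (nu n) := by
  refine ⟨((measurable_W β).mul (by fun_prop)).aestronglyMeasurable, ?_⟩
  refine lt_of_le_of_lt (le_of_eq ?_) (lintegral_W (n := n) h0 hθ hθ2).lt_top
  apply lintegral_congr_ae
  filter_upwards [ae_nu] with q hq
  have hw := W_nonneg h0 (by linarith) hq
  rw [← ENNReal.ofReal_mul hw, ← ofReal_norm, Real.norm_of_nonneg (by positivity)]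

lemma integrable_W_ch {n : ℕ} {β : ℝ} (h0 : 0 < β) (h1 : β < 1) (ζ : Euc n) :
    Integrable (fun q : ℝ × Euc n => (W β q : ℂ) * (1 - ch (-(inner ℝ q.2 ζ)))) (nu n) := by
  have h := (integrable_W (n := n) h0 h1 (by norm_num)).const_mul (2 * Real.pi * ‖ζ‖)
  refine h.mono ?_ ?_
  · have h4 := measurable_W (n := n) β
    have h1 := continuous_ch.measurable
    apply Measurable.aestronglyMeasurable
    fun_prop
  · filter_upwards [ae_nu] with q hq
    have hw := W_nonneg h0 (by linarith) hq
    rw [norm_mul, Complex.norm_real, Real.norm_of_nonneg hw, Real.norm_of_nonneg (by positivity)]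
    have h3 := norm_one_sub_ch_le (-(inner ℝ q.2 ζ))
    rw [abs_neg] at h3
    have h5 := abs_real_inner_le_norm q.2 ζ
    rw [Real.rpow_one]
    calc W β q * ‖1 - ch (-(inner ℝ q.2 ζ))‖ ≤ W β q * (2 * Real.pi * (‖q.2‖ * ‖ζ‖)) := by
          gcongr
          refine h3.trans ?_
          gcongr
      _ = _ := by ring

lemma integral_W_ch {n : ℕ} {β : ℝ} (h0 : 0 < β) (h1 : β < 1) (ζ : Euc n) :
    ∫ q : ℝ × Euc n, (W β q : ℂ) * (1 - ch (-(inner ℝ q.2 ζ))) ∂(nu n) = ((sym β ζ - 1 : ℝ) : ℂ) := by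
  have hi := integrable_W_ch h0 h1 ζ
  unfold nu at hi ⊢
  rw [integral_prod _ hi]
  have hl := levy (b := β / 2) (x := ‖ζ‖ ^ 2) (by linarith) (by linarith) (by positivity)
  unfold sym
  rw [← hl, ← integral_complex_ofReal]
  apply setIntegral_congr_fun measurableSet_Ioi
  intro t ht
  have ht' : (0:ℝ) < t := ht
  simp only
  have e : ∀ y : Euc n, (W β (t, y) : ℂ) * (1 - ch (-(inner ℝ y ζ))) =
      (wl (β / 2) t : ℂ) * ((hk t y : ℂ) - (hk t y : ℂ) * ch (-(inner ℝ y ζ))) := by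
    intro y; unfold W; push_cast; ring
  simp_rw [e]
  have ik : Integrable (fun y : Euc n => ((hk t y : ℝ) : ℂ)) :=
    (integrable_hk (n := n) ht').ofReal (𝕜 := ℂ)
  have ik2 : Integrable fun y : Euc n => (hk t y : ℂ) * ch (-(inner ℝ y ζ)) := by
    refine ik.mono ?_ (Filter.Eventually.of_forall fun y => ?_)
    · have h4 := continuous_hk (n := n) t
      have h1 := continuous_ch
      exact Continuous.aestronglyMeasurable (by fun_prop)
    · rw [norm_mul, norm_ch, mul_one]
  have ik3 : ∫ y : Euc n, (hk t y : ℂ) = 1 := by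
    rw [integral_complex_ofReal, integral_hk ht', Complex.ofReal_one]
  rw [integral_const_mul, integral_sub ik ik2, hk_fourier ht', ik3]
  push_cast; ring

lemma integral_W_ch2 {n : ℕ} {β : ℝ} (h0 : 0 < β) (h1 : β < 1) (ξ η : Euc n) :
    ∫ q : ℝ × Euc n, (W β q : ℂ) * ((1 - ch (-(inner ℝ q.2 ξ))) * (1 - ch (-(inner ℝ q.2 η)))) ∂(nu n) =
      (sym β ξ : ℂ) + sym β η - sym β (ξ + η) - 1 := by
  have e : ∀ q : ℝ × Euc n, (W β q : ℂ) * ((1 - ch (-(inner ℝ q.2 ξ))) * (1 - ch (-(inner ℝ q.2 η)))) =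
      (W β q : ℂ) * (1 - ch (-(inner ℝ q.2 ξ))) + (W β q : ℂ) * (1 - ch (-(inner ℝ q.2 η))) -
      (W β q : ℂ) * (1 - ch (-(inner ℝ q.2 (ξ + η)))) := by
    intro q
    rw [inner_add_right, neg_add, ch_add]; ring
  simp_rw [e]
  have i1 := integrable_W_ch h0 h1 ξ
  have i2 := integrable_W_ch h0 h1 η
  have i3 := integrable_W_ch h0 h1 (ξ + η)
  have i12 : Integrable (fun q : ℝ × Euc n => (W β q : ℂ) * (1 - ch (-(inner ℝ q.2 ξ))) +
      (W β q : ℂ) * (1 - ch (-(inner ℝ q.2 η)))) (nu n) := i1.add i2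
  rw [integral_sub i12 i3, integral_add i1 i2, integral_W_ch h0 h1, integral_W_ch h0 h1, integral_W_ch h0 h1]
  push_cast; ring

end

end IPE

namespace IPE
open scoped SchwartzMap

noncomputable section

lemma norm_le_sym_one {n : ℕ} (ξ : Euc n) : ‖ξ‖ ≤ sym 1 ξ := by
  unfold sym
  rw [← Real.sqrt_eq_rpow]
  apply Real.le_sqrt_of_sq_le
  linarith

/-- The remainder in the fractional Leibniz rule. -/
def rem {n : ℕ} (e β : ℝ) (u v : 𝓢(Euc n, ℂ)) : 𝓢(Euc n, ℂ) :=
  J e (pr u (J β v)) + J e (pr (J β u) v) - J e (pr u v) - J (e + β) (pr u v)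

lemma rem_apply {n : ℕ} {e β : ℝ} (he : 0 ≤ e) (h0 : 0 < β) (h1 : β < 1) (u v : 𝓢(Euc n, ℂ)) (x : Euc n) :
    rem e β u v x = ∫ q : ℝ × Euc n, (W β q : ℂ) * J e (pr (dl q.2 u) (dl q.2 v)) x ∂(nu n) := by
  have hb : ∀ u v : 𝓢(Euc n, ℂ), Integrable (fun p : Euc n × Euc n => ch (inner ℝ (p.1 + p.2) x) *
      ((sym e (p.1 + p.2) : ℂ) * (𝓕 u p.1 * 𝓕 v p.2))) (volume.prod volume) := fun u v => integrable_bilin he u v x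
  have lhs : rem e β u v x = ∫ p : Euc n × Euc n, ch (inner ℝ (p.1 + p.2) x) *
      ((sym e (p.1 + p.2) : ℂ) * (((sym β p.1 : ℂ) + sym β p.2 - sym β (p.1 + p.2) - 1) * (𝓕 u p.1 * 𝓕 v p.2)))
        ∂(volume.prod volume) := by
    change J e (pr u (J β v)) x + J e (pr (J β u) v) x - J e (pr u v) x - J (e + β) (pr u v) x = _
    rw [J_pr_apply he, J_pr_apply he, J_pr_apply he, J_pr_apply (by linarith : 0 ≤ e + β)]
    have i1 := hb u (J β v)
    have i2 := hb (J β u) v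
    have i3 := hb u v
    have i4 := integrable_bilin (by linarith : 0 ≤ e + β) u v x
    rw [← integral_add' i1 i2, ← integral_sub' (i1.add i2) i3, ← integral_sub' ((i1.add i2).sub i3) i4]
    congr 1; ext p
    simp only [Pi.add_apply, Pi.sub_apply]
    rw [fourier_J, fourier_J, sym_add]
    push_cast; ring
  rw [lhs]
  have e2 : ∀ q : ℝ × Euc n, (W β q : ℂ) * J e (pr (dl q.2 u) (dl q.2 v)) x =
      ∫ p : Euc n × Euc n, (W β q : ℂ) * (ch (inner ℝ (p.1 + p.2) x) *
      ((sym e (p.1 + p.2) : ℂ) * (((1 - ch (-(inner ℝ q.2 p.1))) * 𝓕 u p.1) * ((1 - ch (-(inner ℝ q.2 p.2))) * 𝓕 v p.2))))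
        ∂(volume.prod volume) := by
    intro q
    rw [integral_const_mul, J_pr_apply he]
    simp_rw [fourier_dl]
  simp_rw [e2]
  rw [integral_integral_swap]
  · congr 1; ext p
    rw [← integral_W_ch2 h0 h1]
    rw [← integral_mul_const, ← integral_const_mul, ← integral_const_mul]
    congr 1; ext q
    ring
  · have hW := (integrable_W (n := n) (θ := 2) h0 (by linarith) le_rfl).ofReal (𝕜 := ℂ)
    have hI := ((integrable_sym_fourier (e + 1) u).mul_prod (integrable_sym_fourier (e + 1) v)).const_mul
      ((4 * Real.pi ^ 2 * 2 ^ (e / 2) : ℝ) : ℂ)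
    have h := hW.mul_prod hI
    refine h.mono ?_ ?_
    · apply Measurable.aestronglyMeasurable
      have h1 := continuous_ch.measurable
      have h2 := (continuous_sym (n := n) e).measurable
      have h3 := (𝓕 u).continuous.measurable
      have h4 := (𝓕 v).continuous.measurable
      have h5 := measurable_W (n := n) β
      unfold Function.uncurry
      fun_prop
    · have hae : ∀ᵐ z ∂((nu n).prod ((volume : Measure (Euc n)).prod (volume : Measure (Euc n)))), 0 < z.1.1 :=
        Measure.quasiMeasurePreserving_fst.ae ae_nu
      filter_upwards [hae] with z hz
      obtain ⟨q, ξ, η⟩ := z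
      have hw := W_nonneg h0 (by linarith) hz
      simp only [Function.uncurry, norm_mul, norm_ch, one_mul, Complex.norm_real]
      have hr : ∀ a : ℝ, ‖(RCLike.ofReal a : ℂ)‖ = ‖a‖ := fun a => RCLike.norm_ofReal _
      rw [hr]
      simp only at hw
      rw [Real.norm_of_nonneg hw, Real.norm_of_nonneg (mul_nonneg hw (by positivity)), Real.norm_of_nonneg (sym_pos _ _).le,
        Real.norm_of_nonneg (sym_pos _ _).le, Real.norm_of_nonneg (sym_pos _ _).le, Real.norm_of_nonneg (by positivity),
        Real.rpow_two, sym_add, sym_add]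
      have k1 : ‖1 - ch (-(inner ℝ q.2 ξ))‖ ≤ 2 * Real.pi * (‖q.2‖ * sym 1 ξ) := by
        refine (norm_one_sub_ch_le _).trans ?_
        rw [abs_neg]
        gcongr
        refine (abs_real_inner_le_norm _ _).trans ?_
        gcongr
        exact norm_le_sym_one ξ
      have k2 : ‖1 - ch (-(inner ℝ q.2 η))‖ ≤ 2 * Real.pi * (‖q.2‖ * sym 1 η) := by
        refine (norm_one_sub_ch_le _).trans ?_
        rw [abs_neg]
        gcongr
        refine (abs_real_inner_le_norm _ _).trans ?_
        gcongr
        exact norm_le_sym_one η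
      have k3 := sym_peetre he ξ η
      have p1 := (sym_pos 1 ξ).le
      have p2 := (sym_pos 1 η).le
      have p3 := (sym_pos e ξ).le
      have p4 := (sym_pos e η).le
      have p5 := (sym_pos e (ξ + η)).le
      calc _ ≤ W β q * ((2 ^ (e / 2) * (sym e ξ * sym e η)) * ((2 * Real.pi * (‖q.2‖ * sym 1 ξ) * ‖𝓕 u ξ‖) * (2 * Real.pi * (‖q.2‖ * sym 1 η) * ‖𝓕 v η‖))) := by
            gcongr
        _ = _ := by
            rw [Real.norm_of_nonneg (by positivity : (0:ℝ) ≤ Real.pi ^ 2),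
              Real.norm_of_nonneg (by positivity : (0:ℝ) ≤ 2 ^ (e / 2))]
            ring

lemma measurable_J_dl {n : ℕ} {e : ℝ} (he : 0 ≤ e) (u v : 𝓢(Euc n, ℂ)) :
    Measurable (Function.uncurry fun (q : ℝ × Euc n) (x : Euc n) => J e (pr (dl q.2 u) (dl q.2 v)) x) := by
  have h1 := continuous_ch
  have h2 := continuous_sym (n := n) e
  have h3 := (𝓕 u).continuous
  have h4 := (𝓕 v).continuous
  have e2 : (Function.uncurry fun (q : ℝ × Euc n) (x : Euc n) => J e (pr (dl q.2 u) (dl q.2 v)) x) =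
      fun z : (ℝ × Euc n) × Euc n => ∫ p : Euc n × Euc n, (ch (inner ℝ (p.1 + p.2) z.2) *
      ((sym e (p.1 + p.2) : ℂ) * (((1 - ch (-(inner ℝ z.1.2 p.1))) * 𝓕 u p.1) * ((1 - ch (-(inner ℝ z.1.2 p.2))) * 𝓕 v p.2))))
        ∂(volume.prod volume) := by
    funext z
    simp only [Function.uncurry]
    rw [J_pr_apply he]
    simp_rw [fourier_dl]
  rw [e2]
  have hc : Continuous (fun z : ((ℝ × Euc n) × Euc n) × (Euc n × Euc n) => (ch (inner ℝ (z.2.1 + z.2.2) z.1.2) *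
      ((sym e (z.2.1 + z.2.2) : ℂ) * (((1 - ch (-(inner ℝ z.1.1.2 z.2.1))) * 𝓕 u z.2.1) * ((1 - ch (-(inner ℝ z.1.1.2 z.2.2))) * 𝓕 v z.2.2))))) := by
    fun_prop
  exact ((hc.stronglyMeasurable).integral_prod_right' (ν := (volume : Measure (Euc n)).prod (volume : Measure (Euc n)))).measurable

lemma N_rem {n : ℕ} {e β r : ℝ} (he : 0 ≤ e) (h0 : 0 < β) (h1 : β < 1) (hr : 1 ≤ r) (u v : 𝓢(Euc n, ℂ)) :
    N r (rem e β u v) ≤ ∫⁻ q : ℝ × Euc n, ENNReal.ofReal (W β q) * N r (J e (pr (dl q.2 u) (dl q.2 v))) ∂(nu n) := by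
  refine minkowskiN hr (rem e β u v) (W := fun q : ℝ × Euc n => ENNReal.ofReal (W β q))
    (measurable_W β).ennreal_ofReal (measurable_J_dl he u v) ?_
  intro x
  rw [rem_apply he h0 h1]
  refine (enorm_integral_le_lintegral_enorm _).trans (le_of_eq ?_)
  apply lintegral_congr_ae
  filter_upwards [ae_nu] with q hq
  rw [enorm_mul, ← ofReal_norm, Complex.norm_real, Real.norm_of_nonneg (W_nonneg h0 (by linarith) hq)]

lemma N_add_le {n : ℕ} {r : ℝ} (hr : 1 ≤ r) (f g : 𝓢(Euc n, ℂ)) : N r (f + g) ≤ N r f + N r g := by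
  unfold N
  exact eLpNorm_add_le f.continuous.aestronglyMeasurable g.continuous.aestronglyMeasurable
    (by simpa using hr)

lemma N_sub_le {n : ℕ} {r : ℝ} (hr : 1 ≤ r) (f g : 𝓢(Euc n, ℂ)) : N r (f - g) ≤ N r f + N r g := by
  unfold N
  exact eLpNorm_sub_le f.continuous.aestronglyMeasurable g.continuous.aestronglyMeasurable
    (by simpa using hr)

lemma J_add_pr_le {n : ℕ} {e β r : ℝ} (hr : 1 ≤ r) (u v : 𝓢(Euc n, ℂ)) :
    N r (J (e + β) (pr u v)) ≤ N r (J e (pr u (J β v))) + N r (J e (pr (J β u) v)) +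
      N r (J e (pr u v)) + N r (rem e β u v) := by
  have : J (e + β) (pr u v) = J e (pr u (J β v)) + J e (pr (J β u) v) - J e (pr u v) - rem e β u v := by
    unfold rem; abel
  rw [this]
  refine (N_sub_le hr _ _).trans ?_
  gcongr
  refine (N_sub_le hr _ _).trans ?_
  gcongr
  exact N_add_le hr _ _

/-- Product Hölder inequality. -/
lemma N_pr_le {n : ℕ} {p q s : ℝ} (hp : 0 < p) (hq : 0 < q) (hs : 0 < s) (h : 1 / p + 1 / q = 1 / s)
    (u v : 𝓢(Euc n, ℂ)) : N s (pr u v) ≤ N p u * N q v := by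
  unfold N
  have hh : ENNReal.HolderTriple (ENNReal.ofReal p) (ENNReal.ofReal q) (ENNReal.ofReal s) := by
    constructor
    rw [← ENNReal.ofReal_inv_of_pos hp, ← ENNReal.ofReal_inv_of_pos hq, ← ENNReal.ofReal_inv_of_pos hs,
      ← ENNReal.ofReal_add (by positivity) (by positivity)]
    congr 1
    simpa using h
  have := eLpNorm_smul_le_mul_eLpNorm (μ := volume) (p := ENNReal.ofReal p) (q := ENNReal.ofReal q) (r := ENNReal.ofReal s)
    (f := fun x => v x) (φ := fun x => u x) v.continuous.aestronglyMeasurable u.continuous.aestronglyMeasurable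
  refine le_trans (le_of_eq ?_) this
  congr 1

/-- Sobolev in the form used for products: `‖u‖_{P} ≤ C ‖J^a u‖_p` with `1/P = 1/p - g`. -/
lemma sobolev' {n : ℕ} {a p g : ℝ} (ha : 0 ≤ a) (hp : 1 ≤ p) (hg : 0 ≤ g) (hgp : g < 1 / p)
    (hga : a = 0 → g = 0) (h : 0 < a → (n : ℝ) * g < a) :
    ∃ C : ℝ≥0∞, C ≠ ⊤ ∧ ∀ u : 𝓢(Euc n, ℂ), N (1 / (1 / p - g)) u ≤ C * N p (J a u) := by
  have hp0 : 0 < p := by linarith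
  rcases eq_or_lt_of_le ha with h0 | h0
  · refine ⟨1, by simp, fun u => ?_⟩
    rw [hga h0.symm, ← h0, J_zero]; simp
  · obtain ⟨C, hC, hb⟩ := sobolev (n := n) (γ := a) (q := p) (r := 1 / (1 / p - g)) h0 hp (by
      rw [le_div_iff₀ (by linarith)]
      have : p * (1 / p) = 1 := by field_simp
      nlinarith) (by
      rw [one_div_one_div]
      have := h h0
      linarith)
    refine ⟨C, hC, fun u => ?_⟩
    have := hb (J a u)
    rwa [J_J, neg_add_cancel, J_zero] at this

/-- The product theorem. -/
theorem product_est {n : ℕ} {β : ℝ} (h0 : 0 < β) (h1 : β < 1) (m : ℕ) :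
    ∀ (a b p q s : ℝ), m * β ≤ a → m * β ≤ b → 1 ≤ p → 1 ≤ q → 1 ≤ s →
      0 ≤ 1 / p + 1 / q - 1 / s → 1 / p + 1 / q - 1 / s < 1 / p → 1 / p + 1 / q - 1 / s < 1 / q →
      (0 < a + b - m * β → (n : ℝ) * (1 / p + 1 / q - 1 / s) < a + b - m * β) →
      (a + b - m * β = 0 → 1 / p + 1 / q - 1 / s = 0) →
      ∃ C : ℝ≥0∞, C ≠ ⊤ ∧ ∀ u v : 𝓢(Euc n, ℂ),
        N s (J (m * β) (pr u v)) ≤ C * N p (J a u) * N q (J b v) := by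
  induction m with
  | zero =>
    intro a b p q s ha hb hp hq hs hg0 hgp hgq hn hz
    simp only [Nat.cast_zero, zero_mul, sub_zero] at *
    set g := 1 / p + 1 / q - 1 / s with hg
    rcases eq_or_lt_of_le (add_nonneg ha hb) with hab | hab
    · have g0 := hz hab.symm
      have a0 : a = 0 := by linarith
      have b0 : b = 0 := by linarith
      refine ⟨1, by simp, fun u v => ?_⟩
      rw [a0, b0, J_zero, J_zero, J_zero, one_mul]
      exact N_pr_le (by linarith) (by linarith) (by linarith) (by linarith) u v
    · have hfa : a / (a + b) ≤ 1 := by rw [div_le_one hab]; linarith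
      have hfb : b / (a + b) ≤ 1 := by rw [div_le_one hab]; linarith
      have hfa0 : 0 ≤ a / (a + b) := by positivity
      have hfb0 : 0 ≤ b / (a + b) := by positivity
      have hsum : a / (a + b) + b / (a + b) = 1 := by field_simp
      have hng := hn hab
      obtain ⟨C1, hC1, hb1⟩ := sobolev' (n := n) (a := a) (p := p) (g := g * (a / (a + b))) ha hp (by positivity)
        (by nlinarith) (by intro h; rw [h]; simp) (by
          intro h
          have : (n : ℝ) * (g * (a / (a + b))) = (n * g) * (a / (a + b)) := by ring
          rw [this]
          calc (n * g) * (a / (a + b)) < (a + b) * (a / (a + b)) := by gcongr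
            _ = a := by field_simp)
      obtain ⟨C2, hC2, hb2⟩ := sobolev' (n := n) (a := b) (p := q) (g := g * (b / (a + b))) hb hq (by positivity)
        (by nlinarith) (by intro h; rw [h]; simp) (by
          intro h
          have : (n : ℝ) * (g * (b / (a + b))) = (n * g) * (b / (a + b)) := by ring
          rw [this]
          calc (n * g) * (b / (a + b)) < (a + b) * (b / (a + b)) := by gcongr
            _ = b := by field_simp)
      refine ⟨C1 * C2, ENNReal.mul_ne_top hC1 hC2, fun u v => ?_⟩
      rw [J_zero]
      have k1 : 0 < 1 / p - g * (a / (a + b)) := by nlinarith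
      have k2 : 0 < 1 / q - g * (b / (a + b)) := by nlinarith
      calc N s (pr u v) ≤ N (1 / (1 / p - g * (a / (a + b)))) u * N (1 / (1 / q - g * (b / (a + b)))) v := by
            apply N_pr_le (by positivity) (by positivity) (by linarith)
            rw [one_div_one_div, one_div_one_div]
            have : g * (a / (a + b)) + g * (b / (a + b)) = g := by rw [← mul_add, hsum, mul_one]
            linarith
        _ ≤ (C1 * N p (J a u)) * (C2 * N q (J b v)) := by
            gcongr
            · exact hb1 u
            · exact hb2 v
        _ = _ := by ring
  | succ m ih =>
    intro a b p q s ha hb hp hq hs hg0 hgp hgq hn hz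
    push_cast at *
    set e := (m : ℝ) * β with hedef
    have he0 : 0 ≤ e := by positivity
    have hee : ((m : ℝ) + 1) * β = e + β := by rw [hedef]; ring
    rw [hee] at ha hb hn hz ⊢
    set g := 1 / p + 1 / q - 1 / s with hg
    have hpos : 0 < a + b - (e + β) := by linarith
    have hng := hn hpos
    have hng0 : 0 ≤ (n : ℝ) * g := by positivity
    -- choice of the gain exponents
    obtain ⟨σ', hσ1, hσ2, hσ3⟩ : ∃ σ', β / 2 < σ' ∧ σ' ≤ β ∧ (n : ℝ) * g + 2 * σ' < a + b - e := by
      refine ⟨min β (β / 2 + (a + b - (e + β) - n * g) / 4), ?_, min_le_left _ _, ?_⟩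
      · rw [lt_min_iff]; constructor <;> linarith
      · have := min_le_right β (β / 2 + (a + b - (e + β) - n * g) / 4)
        linarith
    set σ := (β / 2 + σ') / 2 with hσ
    obtain ⟨C1, hC1, k1⟩ := ih a (b - β) p q s (by linarith) (by linarith) hp hq hs hg0 hgp hgq
      (fun _ => by linarith) (fun h => by linarith)
    obtain ⟨C2, hC2, k2⟩ := ih (a - β) b p q s (by linarith) (by linarith) hp hq hs hg0 hgp hgq
      (fun _ => by linarith) (fun h => by linarith)
    obtain ⟨C3, hC3, k3⟩ := ih a b p q s (by linarith) (by linarith) hp hq hs hg0 hgp hgq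
      (fun _ => by linarith) (fun h => by linarith)
    obtain ⟨C4, hC4, k4⟩ := ih (a - σ') (b - σ') p q s (by linarith) (by linarith) hp hq hs hg0 hgp hgq
      (fun _ => by linarith) (fun h => by linarith)
    obtain ⟨D1, hD1, d1⟩ := diff_gain (n := n) (γ := σ') (σ := σ) (q := p) (by linarith) (by linarith) (by linarith) hp
    obtain ⟨D2, hD2, d2⟩ := diff_gain (n := n) (γ := σ') (σ := σ) (q := q) (by linarith) (by linarith) (by linarith) hq
    have hI := lintegral_W (n := n) (β := β) (θ := 2 * σ) h0 (by linarith) (by linarith)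
    set I := ∫⁻ q : ℝ × Euc n, ENNReal.ofReal (W β q) * ENNReal.ofReal (‖q.2‖ ^ (2 * σ)) ∂(nu n) with hIdef
    refine ⟨C1 + C2 + C3 + I * (C4 * D1 * D2), ?_, fun u v => ?_⟩
    · have := ENNReal.mul_ne_top hI (ENNReal.mul_ne_top (ENNReal.mul_ne_top hC4 hD1) hD2)
      simp [hC1, hC2, hC3, this]
    have t1 := k1 u (J β v)
    have t2 := k2 (J β u) v
    have t3 := k3 u v
    rw [J_J, sub_add_cancel] at t1 t2
    have t4 : N s (rem e β u v) ≤ I * (C4 * D1 * D2) * N p (J a u) * N q (J b v) := by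
      refine (N_rem he0 h0 h1 hs u v).trans ?_
      have hpt : ∀ y : Euc n, N s (J e (pr (dl y u) (dl y v))) ≤
          ENNReal.ofReal (‖y‖ ^ (2 * σ)) * ((C4 * D1 * D2) * N p (J a u) * N q (J b v)) := by
        intro y
        have x1 := d1 (J a u) y
        have x2 := d2 (J b v) y
        rw [← J_dl, J_J, show -σ' + a = a - σ' by ring] at x1
        rw [← J_dl, J_J, show -σ' + b = b - σ' by ring] at x2
        calc _ ≤ C4 * N p (J (a - σ') (dl y u)) * N q (J (b - σ') (dl y v)) := k4 _ _
          _ ≤ C4 * (D1 * ENNReal.ofReal (‖y‖ ^ σ) * N p (J a u)) * (D2 * ENNReal.ofReal (‖y‖ ^ σ) * N q (J b v)) := by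
              gcongr
          _ = (ENNReal.ofReal (‖y‖ ^ σ) * ENNReal.ofReal (‖y‖ ^ σ)) * ((C4 * D1 * D2) * N p (J a u) * N q (J b v)) := by
              ring
          _ = _ := by
              rw [← ENNReal.ofReal_mul (by positivity), ← Real.rpow_add_of_nonneg (norm_nonneg _) (by linarith) (by linarith), ← two_mul]
      calc _ ≤ ∫⁻ z : ℝ × Euc n, (ENNReal.ofReal (W β z) * ENNReal.ofReal (‖z.2‖ ^ (2 * σ))) *
              ((C4 * D1 * D2) * N p (J a u) * N q (J b v)) ∂(nu n) := by
            refine lintegral_mono fun z => ?_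
            rw [mul_assoc]
            exact mul_le_mul_right (hpt z.2) _
        _ = _ := by
            rw [lintegral_mul_const]
            · ring
            · have h := measurable_W (n := n) β
              have h2 : Measurable fun q : ℝ × Euc n => ‖q.2‖ ^ (2 * σ) := by fun_prop
              exact h.ennreal_ofReal.mul h2.ennreal_ofReal
    refine (J_add_pr_le hs u v).trans ?_
    calc _ ≤ C1 * N p (J a u) * N q (J b v) + C2 * N p (J a u) * N q (J b v) + C3 * N p (J a u) * N q (J b v) +
          I * (C4 * D1 * D2) * N p (J a u) * N q (J b v) := by
          gcongr
      _ = _ := by ring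

end

end IPE

namespace IPE
open scoped SchwartzMap

noncomputable section

/-- Dilation of a Schwartz function. -/
def dil {n : ℕ} (l : ℝ) (hl : l ≠ 0) : 𝓢(Euc n, ℂ) →L[ℂ] 𝓢(Euc n, ℂ) :=
  SchwartzMap.compCLMOfContinuousLinearEquiv ℂ
    (ContinuousLinearEquiv.smulLeft (R₁ := ℝ) (M₁ := Euc n) (Units.mk0 l hl))

lemma dil_apply {n : ℕ} {l : ℝ} (hl : l ≠ 0) (g : 𝓢(Euc n, ℂ)) (x : Euc n) :
    dil l hl g x = g (l • x) := rfl

lemma fourier_dil {n : ℕ} {l : ℝ} (hl : 0 < l) (g : 𝓢(Euc n, ℂ)) (ξ : Euc n) :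
    𝓕 (dil l hl.ne' g) ξ = (((l ^ n)⁻¹ : ℝ) : ℂ) * 𝓕 g (l⁻¹ • ξ) := by
  rw [SchwartzMap.fourier_coe, SchwartzMap.fourier_coe, Real.fourier_eq', Real.fourier_eq']
  have := Measure.integral_comp_smul_of_nonneg (volume : Measure (Euc n))
    (fun v => Complex.exp (((-2 * Real.pi * inner ℝ v (l⁻¹ • ξ) : ℝ) : ℂ) * Complex.I) • g v) l (hR := hl.le)
  rw [finrank_euclideanSpace_fin, Complex.real_smul] at this
  rw [← this]
  congr 1; ext v
  rw [dil_apply, real_inner_smul_left, real_inner_smul_right, mul_inv_cancel_left₀ hl.ne']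

lemma N_dil {n : ℕ} {l p : ℝ} (hl : 0 < l) (hp : 1 ≤ p) (g : 𝓢(Euc n, ℂ)) :
    N p (dil l hl.ne' g) = ENNReal.ofReal (l ^ (-(n : ℝ) / p)) * N p g := by
  have hp0 : 0 < p := by linarith
  unfold N
  rw [N_eq hp, N_eq hp]
  simp_rw [dil_apply]
  have h := lintegral_map (μ := (volume : Measure (Euc n))) (f := fun x => ‖g x‖ₑ ^ p) (g := fun x => l • x)
    (g.continuous.measurable.enorm.pow_const _) (measurable_const_smul l)
  rw [Measure.map_addHaar_smul _ hl.ne', lintegral_smul_measure, finrank_euclideanSpace_fin] at h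
  rw [← h, smul_eq_mul, ENNReal.mul_rpow_of_nonneg _ _ (by positivity), abs_of_pos (by positivity),
    ENNReal.ofReal_rpow_of_nonneg (by positivity) (by positivity)]
  congr 2
  rw [← Real.rpow_natCast, ← Real.rpow_neg hl.le, ← Real.rpow_mul hl.le]
  congr 1; ring

/-- The (normalised) Laplacian. -/
def Dl {n : ℕ} (f : 𝓢(Euc n, ℂ)) : 𝓢(Euc n, ℂ) := J 2 f - f

lemma fourier_Dl {n : ℕ} (f : 𝓢(Euc n, ℂ)) (ξ : Euc n) :
    𝓕 (Dl f) ξ = ((‖ξ‖ ^ 2 : ℝ) : ℂ) * 𝓕 f ξ := by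
  have : 𝓕 (Dl f) = 𝓕 (J 2 f) - 𝓕 f := by
    unfold Dl
    exact map_sub (FourierTransform.fourierCLM ℂ 𝓢(Euc n, ℂ)) _ _
  rw [this]
  change 𝓕 (J 2 f) ξ - 𝓕 f ξ = _
  rw [fourier_J, sym_two]; push_cast; ring

lemma fourier_smul' {n : ℕ} (c : ℂ) (f : 𝓢(Euc n, ℂ)) (ξ : Euc n) :
    𝓕 (c • f) ξ = c * 𝓕 f ξ := by
  have : 𝓕 (c • f) = c • 𝓕 f := map_smul (FourierTransform.fourierCLM ℂ 𝓢(Euc n, ℂ)) _ _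
  rw [this]; rfl

lemma Dl_dil {n : ℕ} {l : ℝ} (hl : 0 < l) (g : 𝓢(Euc n, ℂ)) :
    Dl (dil l hl.ne' g) = ((l ^ 2 : ℝ) : ℂ) • dil l hl.ne' (Dl g) := by
  apply schwartz_ext_fourier
  intro ξ
  rw [fourier_smul', fourier_Dl, fourier_dil hl, fourier_dil hl, fourier_Dl, norm_smul, mul_pow]
  have : (l : ℂ) ≠ 0 := by exact_mod_cast hl.ne'
  rw [Real.norm_of_nonneg (by positivity)]
  push_cast
  field_simp

lemma N_smul {n : ℕ} {r : ℝ} (c : ℂ) (f : 𝓢(Euc n, ℂ)) : N r (c • f) = ‖c‖ₑ * N r f := by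
  unfold N
  exact eLpNorm_const_smul c (f : Euc n → ℂ) _ _

lemma heat_Lq {n : ℕ} {p t : ℝ} (hp : 1 ≤ p) (ht : 0 < t) (f : 𝓢(Euc n, ℂ)) :
    eLpNorm (heat f t) (ENNReal.ofReal p) volume ≤ N p f := by
  rw [N_eq hp, N, N_eq hp]
  calc (∫⁻ x, ‖heat f t x‖ₑ ^ p) ^ (1 / p)
      ≤ (∫⁻ x, (∫⁻ y, ENNReal.ofReal (hk t y) * ‖f (x - y)‖ₑ) ^ p) ^ (1 / p) := by
        gcongr with x
        exact heat_enorm_le f ht x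
    _ ≤ (ENNReal.ofReal ((Real.pi / t) ^ ((n : ℝ) / 2))) ^ (1 / p - 1 / p) * (∫⁻ y, ‖f y‖ₑ ^ p) ^ (1 / p) :=
        conv_Lr (n := n) hp le_rfl (K := fun y => ENNReal.ofReal (hk t y)) (F := fun y => ‖f y‖ₑ)
          (continuous_hk _).measurable.ennreal_ofReal f.continuous.measurable.enorm _
          (lintegral_hk ht).le (fun y => ENNReal.ofReal_le_ofReal (hk_le ht y))
    _ = _ := by simp

lemma integrable_ch_mul {n : ℕ} (f : 𝓢(Euc n, ℂ)) (x : Euc n) :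
    Integrable (fun ξ => ch (inner ℝ ξ x) * 𝓕 f ξ) := by
  refine ((𝓕 f).integrable (μ := volume)).mono ?_ (Filter.Eventually.of_forall fun ξ => ?_)
  · have h1 := continuous_ch
    have h3 := (𝓕 f).continuous
    exact Continuous.aestronglyMeasurable (by fun_prop)
  · simp [norm_ch]

lemma exp_le_one' {n : ℕ} {t : ℝ} (ht : 0 ≤ t) (ξ : Euc n) : Real.exp (-t * ‖ξ‖ ^ 2) ≤ 1 := by
  rw [Real.exp_le_one_iff]
  nlinarith [mul_nonneg ht (sq_nonneg ‖ξ‖)]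

lemma integrable_heat {n : ℕ} {t : ℝ} (ht : 0 ≤ t) (f : 𝓢(Euc n, ℂ)) (x : Euc n) :
    Integrable (fun ξ => ch (inner ℝ ξ x) * (((Real.exp (-t * ‖ξ‖ ^ 2) : ℝ) : ℂ) * 𝓕 f ξ)) := by
  refine ((𝓕 f).integrable (μ := volume)).mono ?_ (Filter.Eventually.of_forall fun ξ => ?_)
  · have h1 := continuous_ch
    have h3 := (𝓕 f).continuous
    exact Continuous.aestronglyMeasurable (by fun_prop)
  · simp only [norm_mul, norm_ch, one_mul, Complex.norm_real]
    refine mul_le_of_le_one_left (norm_nonneg _) ?_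
    rw [Real.norm_of_nonneg (Real.exp_pos _).le]
    exact exp_le_one' ht ξ

lemma sub_heat {n : ℕ} {t : ℝ} (ht : 0 ≤ t) (f : 𝓢(Euc n, ℂ)) (x : Euc n) :
    f x - heat f t x = ∫ ξ, ch (inner ℝ ξ x) * (((1 - Real.exp (-t * ‖ξ‖ ^ 2) : ℝ) : ℂ) * 𝓕 f ξ) := by
  rw [inversion f x]
  unfold heat
  rw [← integral_sub (integrable_ch_mul f x) (integrable_heat ht f x)]
  congr 1; ext ξ; push_cast; ring

lemma sub_heat_eq {n : ℕ} {t : ℝ} (ht : 0 < t) (f : 𝓢(Euc n, ℂ)) (x : Euc n) :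
    f x - heat f t x = ∫ s in Set.Ioc 0 t, heat (Dl f) s x := by
  rw [sub_heat ht.le]
  unfold heat
  rw [integral_integral_swap]
  · congr 1; ext ξ
    have e : ∀ s : ℝ, ch (inner ℝ ξ x) * (((Real.exp (-s * ‖ξ‖ ^ 2) : ℝ) : ℂ) * 𝓕 (Dl f) ξ) =
        (((Real.exp (-s * ‖ξ‖ ^ 2) * ‖ξ‖ ^ 2 : ℝ)) : ℂ) * (ch (inner ℝ ξ x) * 𝓕 f ξ) := by
      intro s; rw [fourier_Dl]; push_cast; ring
    simp_rw [e]
    rw [integral_mul_const, integral_complex_ofReal, ← intervalIntegral.integral_of_le ht.le]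
    rw [intervalIntegral.integral_eq_sub_of_hasDerivAt (f := fun s => -Real.exp (-s * ‖ξ‖ ^ 2))]
    · simp; ring
    · intro s _
      have h0 : HasDerivAt (fun s : ℝ => -s * ‖ξ‖ ^ 2) (-1 * ‖ξ‖ ^ 2) s :=
        ((hasDerivAt_neg s).mul_const (‖ξ‖ ^ 2))
      have h1 : HasDerivAt (fun s : ℝ => -Real.exp (-s * ‖ξ‖ ^ 2)) (-(Real.exp (-s * ‖ξ‖ ^ 2) * (-1 * ‖ξ‖ ^ 2))) s :=
        h0.exp.neg
      exact h1.congr_deriv (by ring)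
    · exact Continuous.intervalIntegrable (by fun_prop) _ _
  · have hc : IntegrableOn (fun _ : ℝ => (1:ℂ)) (Set.Ioc 0 t) := by simp
    have h := hc.mul_prod ((𝓕 (Dl f)).integrable (μ := volume))
    refine h.mono ?_ ?_
    · apply Continuous.aestronglyMeasurable
      have h1 := continuous_ch
      have h3 := (𝓕 (Dl f)).continuous
      unfold Function.uncurry
      fun_prop
    · rw [← Measure.restrict_univ (μ := (volume : Measure (Euc n))), Measure.prod_restrict]
      refine (ae_restrict_mem (measurableSet_Ioc.prod MeasurableSet.univ)).mono ?_
      rintro ⟨s, ξ⟩ ⟨hs, -⟩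
      simp only [Function.uncurry, norm_mul, norm_ch, one_mul, Complex.norm_real]
      refine mul_le_of_le_one_left (norm_nonneg _) ?_
      rw [Real.norm_of_nonneg (Real.exp_pos _).le]
      exact exp_le_one' (le_of_lt hs.1) ξ

lemma measurable_heat_t {n : ℕ} (f : 𝓢(Euc n, ℂ)) (t : ℝ) : Measurable (heat f t) := by
  have h : Measurable (fun x : Euc n => Function.uncurry (heat f) (t, x)) :=
    (measurable_heat f).comp measurable_prodMk_left
  exact h

lemma sub_heat_le_two {n : ℕ} {p t : ℝ} (hp : 1 ≤ p) (ht : 0 < t) (f : 𝓢(Euc n, ℂ)) :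
    eLpNorm (fun x => f x - heat f t x) (ENNReal.ofReal p) volume ≤ 2 * N p f := by
  have hm : Measurable (heat f t) := measurable_heat_t f t
  have h1 := eLpNorm_sub_le (μ := volume) (p := ENNReal.ofReal p) (f := (f : Euc n → ℂ)) (g := heat f t)
    f.continuous.aestronglyMeasurable hm.aestronglyMeasurable (by simpa using hp)
  refine h1.trans ?_
  rw [two_mul]
  exact add_le_add le_rfl (heat_Lq hp ht f)

lemma sub_heat_le {n : ℕ} {p t : ℝ} (hp : 1 ≤ p) (ht : 0 < t) (f : 𝓢(Euc n, ℂ)) :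
    eLpNorm (fun x => f x - heat f t x) (ENNReal.ofReal p) volume ≤ ENNReal.ofReal t * N p (Dl f) := by
  have hp0 : 0 < p := by linarith
  have hm : Measurable (heat f t) := measurable_heat_t f t
  have hfin : eLpNorm (fun x => f x - heat f t x) (ENNReal.ofReal p) volume ≠ ⊤ :=
    ne_top_of_le_ne_top (ENNReal.mul_ne_top (by simp) (N_ne_top p f)) (sub_heat_le_two hp ht f)
  rw [N_eq hp] at hfin ⊢
  refine (minkowski (ν := (volume : Measure ℝ).restrict (Set.Ioc 0 t)) hp
    (u := fun x => ‖f x - heat f t x‖ₑ) (F := fun s x => ‖heat (Dl f) s x‖ₑ)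
    (f.continuous.measurable.sub hm).enorm ?_ (measurable_heat _).enorm ?_).trans ?_
  · intro h
    rw [h, ENNReal.top_rpow_of_pos (by positivity)] at hfin
    exact hfin rfl
  · intro x
    rw [sub_heat_eq ht]
    exact enorm_integral_le_lintegral_enorm _
  · calc _ ≤ ∫⁻ s in Set.Ioc 0 t, N p (Dl f) := by
          refine setLIntegral_mono measurable_const fun s hs => ?_
          rw [← N_eq hp]
          exact heat_Lq hp hs.1 _
      _ = _ := by
          rw [setLIntegral_const, Real.volume_Ioc, sub_zero, mul_comm]

lemma J_sub_eq {n : ℕ} {b : ℝ} (hb : 0 < b) (hb1 : b < 1) (f : 𝓢(Euc n, ℂ)) (x : Euc n) :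
    (J (2 * b) f - f) x = ∫ t in Set.Ioi (0:ℝ), (wl b t : ℂ) * (f x - heat f t x) := by
  have e0 : ∫ t in Set.Ioi (0:ℝ), (wl b t : ℂ) * (f x - heat f t x) =
      ∫ t in Set.Ioi (0:ℝ), ∫ ξ, (wl b t : ℂ) * (ch (inner ℝ ξ x) * (((1 - Real.exp (-t * ‖ξ‖ ^ 2) : ℝ) : ℂ) * 𝓕 f ξ)) := by
    apply setIntegral_congr_fun measurableSet_Ioi
    intro t ht
    have ht' : (0:ℝ) < t := ht
    simp only
    rw [sub_heat ht'.le, integral_const_mul]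
  have e1 : (J (2 * b) f - f) x = ∫ ξ, ch (inner ℝ ξ x) * (((sym (2 * b) ξ - 1 : ℝ) : ℂ) * 𝓕 f ξ) := by
    change J (2 * b) f x - f x = _
    rw [inversion f x, inversion (J (2 * b) f) x, ← integral_sub (integrable_ch_mul _ x) (integrable_ch_mul f x)]
    congr 1; ext ξ; rw [fourier_J]; push_cast; ring
  rw [e0, e1, integral_integral_swap]
  · congr 1; ext ξ
    have hs : sym (2 * b) ξ = (1 + ‖ξ‖ ^ 2) ^ b := by
      unfold sym; congr 1; ring
    rw [hs, ← levy hb hb1 (sq_nonneg ‖ξ‖), ← integral_complex_ofReal, ← integral_mul_const, ← integral_const_mul]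
    congr 1; ext t
    push_cast; ring
  · have hw : IntegrableOn (fun t => wl b t * t) (Set.Ioi 0) := by
      have h := lintegral_wl_pow hb hb1 hb1
      refine ⟨((measurable_wl b).mul measurable_id).aestronglyMeasurable, ?_⟩
      refine lt_of_le_of_lt (le_of_eq ?_) (lt_top_iff_ne_top.2 h)
      apply setLIntegral_congr_fun measurableSet_Ioi
      intro t ht
      have ht' : (0:ℝ) < t := ht
      simp only
      rw [Real.rpow_one, ← ENNReal.ofReal_mul (wl_nonneg hb hb1 ht'),
        Real.enorm_of_nonneg (mul_nonneg (wl_nonneg hb hb1 ht') ht'.le)]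
    have h := hw.ofReal (𝕜 := ℂ) |>.mul_prod ((𝓕 (Dl f)).integrable (μ := volume))
    refine h.mono ?_ ?_
    · apply Measurable.aestronglyMeasurable
      have h1 := continuous_ch.measurable
      have h3 := (𝓕 f).continuous.measurable
      have h4 := measurable_wl b
      unfold Function.uncurry
      fun_prop
    · rw [← Measure.restrict_univ (μ := (volume : Measure (Euc n))), Measure.prod_restrict]
      refine (ae_restrict_mem (measurableSet_Ioi.prod MeasurableSet.univ)).mono ?_
      rintro ⟨t, ξ⟩ ⟨ht, -⟩
      have ht' : (0:ℝ) < t := ht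
      have e : ‖(RCLike.ofReal (wl b t * t) : ℂ)‖ = ‖wl b t‖ * t := by
        rw [RCLike.norm_ofReal, abs_mul, abs_of_pos ht']; rfl
      have e2 : ‖1 - Real.exp (-t * ‖ξ‖ ^ 2)‖ ≤ t * ‖ξ‖ ^ 2 := by
        rw [Real.norm_of_nonneg (by linarith [exp_le_one' ht'.le ξ])]
        linarith [Real.add_one_le_exp (-t * ‖ξ‖ ^ 2)]
      simp only [Function.uncurry, norm_mul, norm_ch, one_mul, Complex.norm_real, e, fourier_Dl]
      have e3 : ‖‖ξ‖ ^ 2‖ = ‖ξ‖ ^ 2 := Real.norm_of_nonneg (by positivity)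
      rw [e3]
      calc ‖wl b t‖ * (‖1 - Real.exp (-t * ‖ξ‖ ^ 2)‖ * ‖𝓕 f ξ‖)
          ≤ ‖wl b t‖ * ((t * ‖ξ‖ ^ 2) * ‖𝓕 f ξ‖) := by gcongr
        _ = _ := by ring

lemma interp {n : ℕ} {b s p : ℝ} (hb : 0 < b) (hb1 : b < 1) (hs : b < s) (hs1 : s < 1) (hp : 1 ≤ p) :
    ∃ C : ℝ≥0∞, C ≠ ⊤ ∧ ∀ f : 𝓢(Euc n, ℂ),
      N p (J (2 * b) f) ≤ N p f + C * ((2 * N p f) ^ (1 - s) * N p (Dl f) ^ s) := by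
  refine ⟨_, lintegral_wl_pow hb hb1 hs, fun f => ?_⟩
  have e : J (2 * b) f = f + (J (2 * b) f - f) := by abel
  rw [e]
  refine (N_add_le hp _ _).trans ?_
  gcongr
  refine (minkowskiN (ν := (volume : Measure ℝ).restrict (Set.Ioi 0)) hp _
    (W := fun t => ENNReal.ofReal (wl b t)) (G := fun t x => f x - heat f t x)
    (measurable_wl b).ennreal_ofReal ?_ ?_).trans ?_
  · exact (f.continuous.measurable.comp measurable_snd).sub (measurable_heat f)
  · intro x
    rw [J_sub_eq hb hb1]
    refine (enorm_integral_le_lintegral_enorm _).trans (le_of_eq ?_)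
    apply setLIntegral_congr_fun measurableSet_Ioi
    intro t ht
    simp only
    rw [enorm_mul]
    congr 1
    rw [← ofReal_norm, Complex.norm_real, Real.norm_of_nonneg (wl_nonneg hb hb1 ht)]
  · have hm : Measurable fun t : ℝ => ENNReal.ofReal (wl b t) * ENNReal.ofReal (t ^ s) := by
      have h2 : Measurable fun t : ℝ => t ^ s := by fun_prop
      exact (measurable_wl b).ennreal_ofReal.mul h2.ennreal_ofReal
    rw [← lintegral_mul_const _ hm]
    refine setLIntegral_mono (hm.mul_const _) fun t ht => ?_
    have ht' : (0:ℝ) < t := ht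
    rw [mul_assoc]
    gcongr
    set A := eLpNorm (fun x => f x - heat f t x) (ENNReal.ofReal p) volume with hA
    calc A = A ^ (1 - s) * A ^ s := by
          rw [← ENNReal.rpow_add_of_nonneg _ _ (by linarith) (by linarith)]; simp
      _ ≤ (2 * N p f) ^ (1 - s) * (ENNReal.ofReal t * N p (Dl f)) ^ s := by
          exact mul_le_mul' (ENNReal.rpow_le_rpow (sub_heat_le_two hp ht' f) (by linarith))
            (ENNReal.rpow_le_rpow (sub_heat_le hp ht' f) (by linarith))
      _ = _ := by
          rw [ENNReal.mul_rpow_of_nonneg _ _ (by linarith : 0 ≤ s), ENNReal.ofReal_rpow_of_nonneg ht'.le (by linarith)]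
          ring

end

end IPE

namespace IPE
open scoped SchwartzMap

noncomputable section

/-- Scaling bound for the Bessel potential norms. -/
def Sc (n : ℕ) (p a : ℝ) : Prop := ∀ (g : 𝓢(Euc n, ℂ)) (η : ℝ), 0 < η → ∃ C : ℝ, 0 ≤ C ∧
  ∀ (l : ℝ) (h0 : 0 < l), 1 ≤ l → N p (J a (dil l h0.ne' g)) ≤ ENNReal.ofReal (C * l ^ (a + η - n / p))

lemma N_dil_real {n : ℕ} {l p : ℝ} (hl : 0 < l) (hp : 1 ≤ p) (g : 𝓢(Euc n, ℂ)) :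
    N p (dil l hl.ne' g) = ENNReal.ofReal ((N p g).toReal * l ^ (-(n : ℝ) / p)) := by
  rw [N_dil hl hp, ENNReal.ofReal_mul ENNReal.toReal_nonneg, ENNReal.ofReal_toReal (N_ne_top p g), mul_comm]

lemma N_Dl_dil {n : ℕ} {l p : ℝ} (hl : 0 < l) (hp : 1 ≤ p) (g : 𝓢(Euc n, ℂ)) :
    N p (Dl (dil l hl.ne' g)) = ENNReal.ofReal ((N p (Dl g)).toReal * l ^ (2 -(n : ℝ) / p)) := by
  rw [Dl_dil hl, N_smul, N_dil_real hl hp, ← ofReal_norm, Complex.norm_real, Real.norm_of_nonneg (by positivity),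
    ← ENNReal.ofReal_mul (by positivity), Real.rpow_sub hl, neg_div, Real.rpow_neg hl.le]
  congr 1
  simp only [Real.rpow_two]
  field_simp

lemma Sc_zero {n : ℕ} {p : ℝ} (hp : 1 ≤ p) : Sc n p 0 := by
  intro g η hη
  refine ⟨(N p g).toReal, ENNReal.toReal_nonneg, fun l h0 hl => ?_⟩
  rw [J_zero, N_dil_real h0 hp]
  apply ENNReal.ofReal_le_ofReal
  apply mul_le_mul_of_nonneg_left _ ENNReal.toReal_nonneg
  apply Real.rpow_le_rpow_of_exponent_le hl
  rw [neg_div]; linarith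

lemma Sc_frac {n : ℕ} {p b : ℝ} (hp : 1 ≤ p) (hb : 0 < b) (hb1 : b < 1) : Sc n p (2 * b) := by
  intro g η hη
  obtain ⟨s, hs, hs1, hsη⟩ : ∃ s, b < s ∧ s < 1 ∧ 2 * s ≤ 2 * b + η := by
    refine ⟨min ((b + 1) / 2) (b + η / 2), lt_min (by linarith) (by linarith),
      lt_of_le_of_lt (min_le_left _ _) (by linarith), ?_⟩
    have := min_le_right ((b + 1) / 2) (b + η / 2)
    linarith
  obtain ⟨C, hC, h⟩ := interp (n := n) (p := p) hb hb1 hs hs1 hp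
  obtain ⟨c, hC0, rfl⟩ : ∃ c : ℝ, 0 ≤ c ∧ C = ENNReal.ofReal c :=
    ⟨C.toReal, ENNReal.toReal_nonneg, (ENNReal.ofReal_toReal hC).symm⟩
  set A := (N p g).toReal with hA
  set B := (N p (Dl g)).toReal with hB
  have hA0 : 0 ≤ A := ENNReal.toReal_nonneg
  have hB0 : 0 ≤ B := ENNReal.toReal_nonneg
  refine ⟨A + c * ((2 * A) ^ (1 - s) * B ^ s), by positivity, fun l h0 hl => ?_⟩
  refine (h _).trans ?_
  rw [N_dil_real h0 hp, N_Dl_dil h0 hp, ← hA, ← hB,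
    show (2 : ℝ≥0∞) = ENNReal.ofReal 2 by simp, ← ENNReal.ofReal_mul (by norm_num),
    ENNReal.ofReal_rpow_of_nonneg (by positivity) (by linarith),
    ENNReal.ofReal_rpow_of_nonneg (by positivity) (by linarith),
    ← ENNReal.ofReal_mul (by positivity), ← ENNReal.ofReal_mul (by positivity),
    ← ENNReal.ofReal_add (by positivity) (by positivity)]
  apply ENNReal.ofReal_le_ofReal
  have e1 : l ^ (-(n : ℝ) / p) ≤ l ^ (2 * b + η - n / p) := by
    apply Real.rpow_le_rpow_of_exponent_le hl
    rw [neg_div]; linarith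
  have e2 : (l ^ (-(n : ℝ) / p)) ^ (1 - s) * (l ^ (2 - (n : ℝ) / p)) ^ s ≤ l ^ (2 * b + η - n / p) := by
    rw [← Real.rpow_mul h0.le, ← Real.rpow_mul h0.le, ← Real.rpow_add h0]
    apply Real.rpow_le_rpow_of_exponent_le hl
    have : -(n : ℝ) / p * (1 - s) + (2 - n / p) * s = 2 * s - n / p := by ring
    linarith
  rw [← mul_assoc 2 A, Real.mul_rpow (by positivity) (by positivity), Real.mul_rpow hB0 (by positivity)]
  calc A * l ^ (-(n : ℝ) / p) + c * ((2 * A) ^ (1 - s) * (l ^ (-(n : ℝ) / p)) ^ (1 - s) * (B ^ s * (l ^ (2 - (n : ℝ) / p)) ^ s))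
      = A * l ^ (-(n : ℝ) / p) + c * ((2 * A) ^ (1 - s) * B ^ s) * ((l ^ (-(n : ℝ) / p)) ^ (1 - s) * (l ^ (2 - (n : ℝ) / p)) ^ s) := by ring
    _ ≤ A * l ^ (2 * b + η - n / p) + c * ((2 * A) ^ (1 - s) * B ^ s) * l ^ (2 * b + η - n / p) := by
        gcongr
    _ = _ := by ring

lemma Sc_step {n : ℕ} {p a : ℝ} (hp : 1 ≤ p) (h : Sc n p a) : Sc n p (a + 2) := by
  intro g η hη
  obtain ⟨C1, hC1, h1⟩ := h g η hη
  obtain ⟨C2, hC2, h2⟩ := h (Dl g) η hη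
  refine ⟨C1 + C2, by positivity, fun l h0 hl => ?_⟩
  have e : J (a + 2) (dil l h0.ne' g) = J a (dil l h0.ne' g) + ((l ^ 2 : ℝ) : ℂ) • J a (dil l h0.ne' (Dl g)) := by
    rw [← J_J, ← map_smul, ← Dl_dil h0, ← map_add]
    congr 1
    unfold Dl; abel
  rw [e]
  refine (N_add_le hp _ _).trans ?_
  rw [N_smul, ← ofReal_norm, Complex.norm_real, Real.norm_of_nonneg (by positivity)]
  refine (add_le_add (h1 l h0 hl) (mul_le_mul_right (h2 l h0 hl) _)).trans ?_
  rw [← ENNReal.ofReal_mul (by positivity), ← ENNReal.ofReal_add (by positivity) (by positivity)]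
  apply ENNReal.ofReal_le_ofReal
  have e1 : l ^ (a + η - n / p) ≤ l ^ (a + 2 + η - n / p) :=
    Real.rpow_le_rpow_of_exponent_le hl (by linarith)
  have e2 : l ^ 2 * l ^ (a + η - n / p) = l ^ (a + 2 + η - n / p) := by
    rw [← Real.rpow_two, ← Real.rpow_add h0]; congr 1; ring
  calc C1 * l ^ (a + η - n / p) + l ^ 2 * (C2 * l ^ (a + η - n / p))
      = C1 * l ^ (a + η - n / p) + C2 * (l ^ 2 * l ^ (a + η - n / p)) := by ring
    _ ≤ C1 * l ^ (a + 2 + η - n / p) + C2 * l ^ (a + 2 + η - n / p) := by rw [e2]; gcongr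
    _ = _ := by ring

lemma Sc_all {n : ℕ} {p a : ℝ} (hp : 1 ≤ p) (ha : 0 ≤ a) : Sc n p a := by
  have key : ∀ (m : ℕ) (b : ℝ), 0 ≤ b → b < 1 → Sc n p (2 * b + 2 * m) := by
    intro m
    induction m with
    | zero =>
      intro b hb hb1
      rcases hb.eq_or_lt with rfl | hb
      · simpa using Sc_zero hp
      · simpa using Sc_frac hp hb hb1
    | succ m ih =>
      intro b hb hb1
      have := Sc_step hp (ih b hb hb1)
      convert this using 1
      push_cast; ring
  have h1 := Nat.floor_le (show 0 ≤ a / 2 by positivity)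
  have h2 := Nat.lt_floor_add_one (a / 2)
  have := key ⌊a / 2⌋₊ (a / 2 - ⌊a / 2⌋₊) (by linarith) (by linarith)
  convert this using 1
  ring

/-- Real-valued Schwartz functions: conjugation symmetry of the Fourier transform. -/
lemma fourier_neg_real {n : ℕ} (f : 𝓢(Euc n, ℂ)) (hf : ∀ x, (starRingEnd ℂ) (f x) = f x) (ξ : Euc n) :
    𝓕 f (-ξ) = (starRingEnd ℂ) (𝓕 f ξ) := by
  rw [SchwartzMap.fourier_coe, Real.fourier_eq', Real.fourier_eq', ← integral_conj]
  congr 1; ext v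
  rw [smul_eq_mul, smul_eq_mul, map_mul, hf, ← Complex.exp_conj, map_mul, Complex.conj_I, Complex.conj_ofReal]
  congr 2
  rw [inner_neg_right]; push_cast; ring

lemma pairing_lower {n : ℕ} {a p q : ℝ} (hp : 1 < p) (hq : 1 < q) (hpq : 1 / p + 1 / q = 1)
    (f : 𝓢(Euc n, ℂ)) (hf : ∀ x, (starRingEnd ℂ) (f x) = f x) :
    ENNReal.ofReal (∫ ξ, sym a ξ * ‖𝓕 f ξ‖ ^ 2) ≤ N q (J a f) * N p f := by
  have h1 : 𝓕 (pr (J a f) f) 0 = ((∫ ξ, sym a ξ * ‖𝓕 f ξ‖ ^ 2 : ℝ) : ℂ) := by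
    rw [fourier_pr, ← integral_complex_ofReal]
    congr 1; ext ξ
    rw [fourier_J, zero_sub, fourier_neg_real f hf, mul_assoc, Complex.mul_conj, Complex.normSq_eq_norm_sq]
    push_cast; rfl
  have h2 : ‖𝓕 (pr (J a f) f) 0‖ₑ ≤ N 1 (pr (J a f) f) := by
    rw [SchwartzMap.fourier_coe, Real.fourier_eq']
    refine (enorm_integral_le_lintegral_enorm _).trans ?_
    unfold N
    rw [ENNReal.ofReal_one, eLpNorm_one_eq_lintegral_enorm]
    simp
  have h3 : N 1 (pr (J a f) f) ≤ N q (J a f) * N p f :=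
    N_pr_le (by linarith) (by linarith) one_pos (by rw [add_comm, hpq]; simp) _ _
  refine le_trans (le_of_eq ?_) (h2.trans h3)
  rw [h1, ← ofReal_norm, Complex.norm_real, Real.norm_of_nonneg]
  apply integral_nonneg
  intro ξ
  exact mul_nonneg (sym_pos a ξ).le (sq_nonneg _)

lemma integrable_sym_sq {n : ℕ} (a : ℝ) (f : 𝓢(Euc n, ℂ)) :
    Integrable (fun ξ => sym a ξ * ‖𝓕 f ξ‖ ^ 2) := by
  have h := (pr (𝓕 (J a f)) (𝓕 f)).integrable (μ := volume)
  refine h.norm.congr (Filter.Eventually.of_forall fun ξ => ?_)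
  simp only
  rw [pr_apply, fourier_J, norm_mul, norm_mul, Complex.norm_real, Real.norm_of_nonneg (sym_pos a ξ).le]
  ring

lemma scale_lower {n : ℕ} {a l : ℝ} (ha : 0 ≤ a) (hl : 0 < l) (g : 𝓢(Euc n, ℂ)) :
    l ^ (a - n) * ∫ ξ, ‖ξ‖ ^ a * ‖𝓕 g ξ‖ ^ 2 ≤ ∫ ξ, sym a ξ * ‖𝓕 (dil l hl.ne' g) ξ‖ ^ 2 := by
  have e : ∀ ξ : Euc n, ‖ξ‖ ^ a ≤ sym a ξ := by
    intro ξ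
    unfold sym
    calc ‖ξ‖ ^ a = (‖ξ‖ ^ 2) ^ (a / 2) := by
          rw [← Real.rpow_natCast, ← Real.rpow_mul (norm_nonneg _)]; congr 1; push_cast; ring
      _ ≤ _ := by gcongr; linarith
  have h1 : ∫ ξ, ‖ξ‖ ^ a * ‖𝓕 (dil l hl.ne' g) ξ‖ ^ 2 = l ^ (a - n) * ∫ ξ, ‖ξ‖ ^ a * ‖𝓕 g ξ‖ ^ 2 := by
    have h := Measure.integral_comp_inv_smul_of_nonneg (volume : Measure (Euc n))
      (fun ξ => ‖ξ‖ ^ a * ‖𝓕 g ξ‖ ^ 2) hl.le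
    rw [finrank_euclideanSpace_fin, smul_eq_mul] at h
    have e3 : l ^ (a - n) = l ^ a * ((l ^ n)⁻¹) ^ 2 * l ^ n := by
      rw [Real.rpow_sub hl, Real.rpow_natCast]; field_simp
    rw [e3, mul_assoc _ (l ^ n), ← h, ← integral_const_mul]
    congr 1; ext ξ
    rw [fourier_dil hl, norm_mul, Complex.norm_real, Real.norm_of_nonneg (by positivity), norm_smul,
      Real.norm_of_nonneg (by positivity), Real.mul_rpow (by positivity) (norm_nonneg _), Real.inv_rpow hl.le]
    have : l ^ a ≠ 0 := by positivity
    field_simp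
  rw [← h1]
  refine integral_mono_of_nonneg (Filter.Eventually.of_forall fun ξ => ?_) (integrable_sym_sq a _)
    (Filter.Eventually.of_forall fun ξ => ?_)
  · positivity
  · exact mul_le_mul_of_nonneg_right (e ξ) (sq_nonneg _)

lemma integral_pos' {n : ℕ} {a : ℝ} (hn : 0 < n) (ha : 0 ≤ a) (g : 𝓢(Euc n, ℂ)) (hg : g ≠ 0) :
    0 < ∫ ξ, ‖ξ‖ ^ a * ‖𝓕 g ξ‖ ^ 2 := by
  have hcont : Continuous (fun ξ : Euc n => ‖ξ‖ ^ a * ‖𝓕 g ξ‖ ^ 2) := by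
    have h3 := (𝓕 g).continuous
    exact (Continuous.rpow_const continuous_norm (fun _ => Or.inr ha)).mul (by fun_prop)
  have hinteg : Integrable (fun ξ : Euc n => ‖ξ‖ ^ a * ‖𝓕 g ξ‖ ^ 2) := by
    refine (integrable_sym_sq a g).mono hcont.aestronglyMeasurable (Filter.Eventually.of_forall fun ξ => ?_)
    rw [Real.norm_of_nonneg (by positivity), Real.norm_of_nonneg (mul_nonneg (sym_pos a ξ).le (sq_nonneg _))]
    refine mul_le_mul_of_nonneg_right ?_ (sq_nonneg _)
    unfold sym
    calc ‖ξ‖ ^ a = (‖ξ‖ ^ 2) ^ (a / 2) := by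
          rw [← Real.rpow_natCast, ← Real.rpow_mul (norm_nonneg _)]; congr 1; push_cast; ring
      _ ≤ _ := by gcongr; linarith
  have hne : ∃ ξ : Euc n, ξ ≠ 0 ∧ 𝓕 g ξ ≠ 0 := by
    by_contra hcon
    push Not at hcon
    apply hg
    have : Nontrivial (Euc n) := by
      have : Nonempty (Fin n) := ⟨⟨0, hn⟩⟩
      infer_instance
    have hd : Dense ({0}ᶜ : Set (Euc n)) := dense_compl_singleton 0
    have hz : (fun ξ => 𝓕 g ξ) = fun _ => 0 := by
      apply Continuous.ext_on hd (𝓕 g).continuous continuous_const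
      intro ξ hξ
      exact hcon ξ hξ
    apply schwartz_ext_fourier
    intro ξ
    have h0 : 𝓕 (0 : 𝓢(Euc n, ℂ)) = 0 := map_zero (FourierTransform.fourierCLM ℂ 𝓢(Euc n, ℂ))
    rw [h0]
    exact congrFun hz ξ
  obtain ⟨ξ0, h1, h2⟩ := hne
  refine integral_pos_of_integrable_nonneg_nonzero (x := ξ0) hcont hinteg (fun ξ => by positivity) ?_
  have : 0 < ‖ξ0‖ := norm_pos_iff.2 h1
  have : 0 < ‖𝓕 g ξ0‖ := norm_pos_iff.2 h2
  positivity

end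

end IPE

namespace IPE
open scoped SchwartzMap

noncomputable section

lemma isTest_schwartz {n : ℕ} {φ : Euc n → ℂ} (h : IsTest φ) : ∃ f : 𝓢(Euc n, ℂ), (f : Euc n → ℂ) = φ :=
  ⟨h.2.toSchwartzMap h.1, rfl⟩

lemma HNorm_eq {n : ℕ} (a r : ℝ) (f : 𝓢(Euc n, ℂ)) : HNorm n a r f = (N r (J a f)).toReal := by
  unfold HNorm HNormE N
  rw [besselPotential_eq]

lemma HNormE_eq {n : ℕ} (a : ℝ) {p : ℝ} (hp : 1 < p) (f : 𝓢(Euc n, ℂ)) :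
    HNormE n a (conjExpE p) f = (N (p / (p - 1)) (J a f)).toReal := by
  unfold HNormE N conjExpE
  rw [besselPotential_eq, if_neg (not_le.2 hp)]

lemma isTest_bump {n : ℕ} (b : ContDiffBump (0 : Euc n)) : IsTest (fun x => ((b x : ℝ) : ℂ)) := by
  constructor
  · exact Complex.ofRealCLM.contDiff.comp b.contDiff
  · exact b.hasCompactSupport.comp_left (g := fun r : ℝ => (r : ℂ)) Complex.ofReal_zero

lemma no_bound {n : ℕ} (hn : 0 < n) {p ν C₁ : ℝ} (hp1 : 1 < p) (hp2 : p < 2) (hν : 0 ≤ ν) (hC₁ : 0 ≤ C₁)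
    (h1 : ∀ φ ψ : Euc n → ℂ, IsTest φ → IsTest ψ →
      HNormE n ν (conjExpE p) (fun x => φ x * ψ x) ≤ C₁ * HNorm n ν p φ * HNormE n ν (conjExpE p) ψ) : False := by
  have hn' : (0:ℝ) < n := by exact_mod_cast hn
  let b1 : ContDiffBump (0 : Euc n) := ⟨1, 2, one_pos, one_lt_two⟩
  let b2 : ContDiffBump (0 : Euc n) := ⟨2, 3, two_pos, by norm_num⟩
  obtain ⟨g, hg⟩ := isTest_schwartz (isTest_bump b1)
  obtain ⟨χ, hχ⟩ := isTest_schwartz (isTest_bump b2)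
  have hg' : ∀ x, g x = ((b1 x : ℝ) : ℂ) := fun x => congrFun hg x
  have hχ' : ∀ x, χ x = ((b2 x : ℝ) : ℂ) := fun x => congrFun hχ x
  have hg0 : g ≠ 0 := by
    intro h
    have h2 := hg' 0
    rw [h, b1.one_of_mem_closedBall (by simp [b1.rIn_pos.le])] at h2
    simp at h2
  set q := p / (p - 1) with hq
  have hq1 : 1 < q := by rw [hq, lt_div_iff₀ (by linarith)]; linarith
  have hpq : 1 / p + 1 / q = 1 := by rw [hq]; field_simp; ring
  set η := ((n : ℝ) / p - n / 2) with hη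
  have hη0 : 0 < η := by
    rw [hη, sub_pos]; exact div_lt_div_of_pos_left hn' (by linarith) hp2
  obtain ⟨C, hC, hS⟩ := Sc_all (n := n) (p := p) (a := ν) hp1.le hν g η hη0
  set c := ∫ ξ, ‖ξ‖ ^ ν * ‖𝓕 g ξ‖ ^ 2 with hc
  have hc0 : 0 < c := integral_pos' hn hν g hg0
  set K := (N q (J ν χ)).toReal with hK
  have hK0 : 0 ≤ K := ENNReal.toReal_nonneg
  set A := (N p g).toReal with hA
  have hA0 : 0 ≤ A := ENNReal.toReal_nonneg
  have main : ∀ l : ℝ, 1 ≤ l → c ≤ C₁ * C * K * A * l ^ (-η) := by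
    intro l hl
    have h0 : 0 < l := by linarith
    set f := dil l h0.ne' g with hf
    have hfl : ∀ x, f x = ((b1 (l • x) : ℝ) : ℂ) := fun x => by rw [hf, dil_apply, hg']
    have hft : IsTest (f : Euc n → ℂ) := by
      refine ⟨f.smooth _, ?_⟩
      have h := (isTest_bump b1).2.comp_smul h0.ne'
      have e : (f : Euc n → ℂ) = fun x => ((b1 (l • x) : ℝ) : ℂ) := funext hfl
      rw [e]; exact h
    have hprod : (fun x => f x * χ x) = (f : Euc n → ℂ) := by
      funext x
      by_cases hx : ‖x‖ ≤ 2
      · rw [hχ', b2.one_of_mem_closedBall (by simpa [b2] using hx)]; simp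
      · have : b1 (l • x) = 0 := by
          apply b1.zero_of_le_dist
          rw [dist_zero_right, norm_smul, Real.norm_of_nonneg h0.le]
          change 2 ≤ l * ‖x‖
          nlinarith
        rw [hfl, this]; simp
    have hb := h1 f χ hft (by rw [hχ]; exact isTest_bump b2)
    rw [hprod, HNormE_eq ν hp1, HNormE_eq ν hp1, HNorm_eq, ← hq, ← hK] at hb
    have hlow := pairing_lower (a := ν) hp1 hq1 hpq f (fun x => by rw [hfl, Complex.conj_ofReal])
    have hlow2 := scale_lower hν h0 g
    rw [← hc, ← hf] at hlow2
    have hup : (N p (J ν f)).toReal ≤ C * l ^ (ν + η - n / p) :=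
      ENNReal.toReal_le_of_le_ofReal (by positivity) (hS l h0 hl)
    have hlow3 : l ^ (ν - n) * c ≤ (N q (J ν f)).toReal * (A * l ^ (-(n : ℝ) / p)) := by
      refine hlow2.trans ?_
      have h5 := ENNReal.toReal_mono (ENNReal.mul_ne_top (N_ne_top _ _) (N_ne_top _ _)) hlow
      rw [ENNReal.toReal_mul, ENNReal.toReal_ofReal, hf, N_dil_real h0 hp1.le,
        ENNReal.toReal_ofReal (by positivity)] at h5
      · exact h5
      · exact le_trans (by positivity) hlow2
    have h6 : l ^ (ν - n) * c ≤ (C₁ * (C * l ^ (ν + η - n / p)) * K) * (A * l ^ (-(n : ℝ) / p)) := by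
      refine hlow3.trans ?_
      gcongr
      refine hb.trans ?_
      gcongr
    have e : l ^ (ν + η - n / p) * l ^ (-(n : ℝ) / p) = l ^ (ν - n) * l ^ (-η) := by
      rw [← Real.rpow_add h0, ← Real.rpow_add h0]; congr 1; rw [hη]; ring
    have h7 : l ^ (ν - n) * c ≤ l ^ (ν - n) * (C₁ * C * K * A * l ^ (-η)) := by
      refine h6.trans (le_of_eq ?_)
      calc _ = C₁ * C * K * A * (l ^ (ν + η - n / p) * l ^ (-(n : ℝ) / p)) := by ring
        _ = _ := by rw [e]; ring
    exact le_of_mul_le_mul_left h7 (by positivity)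
  have ht := (tendsto_rpow_neg_atTop hη0).const_mul (C₁ * C * K * A)
  rw [mul_zero] at ht
  have := ge_of_tendsto ht (Filter.eventually_atTop.2 ⟨1, main⟩)
  linarith

lemma final {n : ℕ} {p α ε : ℝ} (hp1 : 2 ≤ p) (hα0 : 0 < α) (hα : α ≤ n / p) (hε : 0 < ε) :
    ∃ C : ℝ, 0 ≤ C ∧ ∀ φ ψ : Euc n → ℂ, IsTest φ → IsTest ψ →
      HNorm n α ((n + p * ε) / (n + p * ε - α)) (fun x => φ x * ψ x) ≤
        C * HNorm n α p φ * HNormE n α (conjExpE p) ψ := by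
  have hp0 : 0 < p := by linarith
  have hαn : α * p ≤ n := by rwa [le_div_iff₀ hp0] at hα
  have hpε : 0 < p * ε := by positivity
  have hn0 : (0:ℝ) ≤ n := Nat.cast_nonneg n
  set M := (n : ℝ) + p * ε with hM
  have hMα : α * p < M := by linarith
  have hM0 : 0 < M := by positivity
  have hMα1 : 0 < M - α := by nlinarith
  set s := M / (M - α) with hs
  set q := p / (p - 1) with hq
  have hs1 : 1 ≤ s := by rw [hs, le_div_iff₀ hMα1]; linarith
  have hq1 : 1 ≤ q := by rw [hq, le_div_iff₀ (by linarith)]; linarith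
  have hg : 1 / p + 1 / q - 1 / s = α / M := by
    have : p - 1 ≠ 0 := by linarith
    rw [hq, hs]; field_simp; ring
  have hgp : α / M < 1 / p := by rw [div_lt_div_iff₀ hM0 hp0]; linarith
  have hpq : 1 / p ≤ 1 / q := by
    have h0 : 0 < p - 1 := by linarith
    rw [hq, one_div_div, div_le_div_iff_of_pos_right hp0]; linarith
  set m := ⌊α⌋₊ + 1 with hm
  have hm0 : (0:ℝ) < m := by rw [hm]; positivity
  have hmα : α < m := by rw [hm]; push_cast; exact Nat.lt_floor_add_one α
  have hmβ : (m : ℝ) * (α / m) = α := by field_simp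
  obtain ⟨C, hC, h⟩ := product_est (n := n) (β := α / m) (by positivity) (by rw [div_lt_one hm0]; exact hmα) m
    α α p q s (by rw [hmβ]) (by rw [hmβ]) (by linarith) hq1 hs1 (by rw [hg]; positivity) (by rw [hg]; exact hgp)
    (by rw [hg]; linarith)
    (by
      intro _
      rw [hg, hmβ, mul_div_assoc', div_lt_iff₀ hM0]
      nlinarith)
    (by intro h0; rw [hmβ] at h0; exfalso; linarith)
  refine ⟨C.toReal, ENNReal.toReal_nonneg, fun φ ψ hφ hψ => ?_⟩
  obtain ⟨u, rfl⟩ := isTest_schwartz hφ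
  obtain ⟨v, rfl⟩ := isTest_schwartz hψ
  have e : (fun x => u x * v x) = (pr u v : Euc n → ℂ) := by funext x; rw [pr_apply]
  rw [e, HNorm_eq, HNorm_eq, HNormE_eq α (by linarith), ← ENNReal.toReal_mul, ← ENNReal.toReal_mul]
  have h2 := h u v
  rw [hmβ] at h2
  exact ENNReal.toReal_mono (ENNReal.mul_ne_top (ENNReal.mul_ne_top hC (N_ne_top _ _)) (N_ne_top _ _)) h2

end

end IPE

/-- For `1<p<∞`, `0 ≤ α ≤ n/p`, `ε>0`, `ν = n/p+ε`: from
`‖φψ‖_{H^ν_{p'}} ≤ C‖φ‖_{H^ν_p}‖ψ‖_{H^ν_{p'}}` and Hölder's inequality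
`‖φψ‖_{L_1} ≤ ‖φ‖_{L_p}‖ψ‖_{L_{p'}}`, multilinear interpolation yields
`‖φψ‖_{H^α_s} ≤ C‖φ‖_{H^α_p}‖ψ‖_{H^α_{p'}}` with `s = (n+pε)/(n+pε-α)`. -/
theorem interpolation_product_estimate {n : ℕ} (p α ε : ℝ) (hp1 : 1 < p)
    (hα0 : 0 ≤ α) (hα : α ≤ (n : ℝ) / p) (hε : 0 < ε) (C₁ : ℝ) (hC₁ : 0 ≤ C₁)
    (h1 : ∀ φ ψ : Euc n → ℂ, IsTest φ → IsTest ψ →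
      HNormE n ((n : ℝ) / p + ε) (conjExpE p) (fun x => φ x * ψ x) ≤
        C₁ * HNorm n ((n : ℝ) / p + ε) p φ *
          HNormE n ((n : ℝ) / p + ε) (conjExpE p) ψ)
    (h2 : ∀ φ ψ : Euc n → ℂ, IsTest φ → IsTest ψ →
      HNorm n 0 1 (fun x => φ x * ψ x) ≤ HNorm n 0 p φ * HNormE n 0 (conjExpE p) ψ) :
    ∃ C : ℝ, 0 ≤ C ∧ ∀ φ ψ : Euc n → ℂ, IsTest φ → IsTest ψ →
      HNorm n α (((n : ℝ) + p * ε) / ((n : ℝ) + p * ε - α)) (fun x => φ x * ψ x) ≤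
        C * HNorm n α p φ * HNormE n α (conjExpE p) ψ := by
  have hp0 : 0 < p := by linarith
  have hn0 : (0:ℝ) ≤ n := Nat.cast_nonneg n
  rcases hα0.eq_or_lt with h | hαpos
  · subst h
    refine ⟨1, zero_le_one, fun φ ψ hφ hψ => ?_⟩
    have hne : (n : ℝ) + p * ε ≠ 0 := by positivity
    rw [sub_zero, div_self hne, one_mul]
    exact h2 φ ψ hφ hψ
  · rcases le_or_gt 2 p with hp2 | hp2
    · exact IPE.final hp2 hαpos hα hε
    · exfalso
      have hn : 0 < n := by
        rcases Nat.eq_zero_or_pos n with h | h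
        · rw [h] at hα; simp at hα; linarith
        · exact h
      exact IPE.no_bound hn hp1 hp2 (by positivity) hC₁ h1
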